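/- arXiv:2003.02714 — 3 statements merged into one kernel-verified Lean document; each statement's English description precedes it below -/
import Mathlib

section
/- For every normal PO-dilator W and every partial order X there exists a Kruskal fixed point (Z, ι, κ) of W over X that satisfies condition (i). -/
universe u

/-- A bundled partial order. -/
structure POrd : Type (u + 1) where
  carrier : Type u
  [str : PartialOrder carrier]

instance : CoeSort POrd.{u} (Type u) := ⟨POrd.carrier⟩
attribute [instance] POrd.str

def POrd.of (X : Type u) [PartialOrder X] : POrd.{u} := ⟨X⟩

/-- A quasi embedding of partial orders. -/
def QuasiEmb {X Y : Type*} [PartialOrder X] [PartialOrder Y] (f : X → Y) : Prop :=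
  ∀ x y : X, f x ≤ f y → x ≤ y

/-- An embedding of partial orders. -/
def IsEmb {X Y : Type*} [PartialOrder X] [PartialOrder Y] (f : X → Y) : Prop :=
  ∀ x y : X, x ≤ y ↔ f x ≤ f y

theorem quasiEmb_id {X : Type*} [PartialOrder X] : QuasiEmb (id : X → X) :=
  fun _ _ h => h

theorem QuasiEmb.comp {X Y Z : Type*} [PartialOrder X] [PartialOrder Y] [PartialOrder Z]
    {f : X → Y} {g : Y → Z} (hf : QuasiEmb f) (hg : QuasiEmb g) :
    QuasiEmb (g ∘ f) := fun x y h => hf x y (hg _ _ h)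

/-- `LeFin a b` is the relation `a ≤ᶠⁱⁿ b` on subsets of a partial order. -/
def LeFin {X : Type*} [PartialOrder X] (a b : Set X) : Prop :=
  ∀ x ∈ a, ∃ y ∈ b, x ≤ y

/-- A PO-dilator: an embedding-preserving functor on partial orders with quasi embeddings,
together with a natural finite support. -/
structure PODilator : Type (u + 1) where
  obj : POrd.{u} → POrd.{u}
  map : {X Y : POrd.{u}} → (f : X → Y) → QuasiEmb f → (obj X → obj Y)
  supp : {X : POrd.{u}} → obj X → Set X
  map_quasiEmb : ∀ {X Y : POrd.{u}} (f : X → Y) (hf : QuasiEmb f), QuasiEmb (map f hf)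
  map_id : ∀ (X : POrd.{u}), map (id : X → X) quasiEmb_id = id
  map_comp : ∀ {X Y Z : POrd.{u}} (f : X → Y) (g : Y → Z) (hf : QuasiEmb f) (hg : QuasiEmb g),
      map (g ∘ f) (hf.comp hg) = map g hg ∘ map f hf
  map_emb : ∀ {X Y : POrd.{u}} (f : X → Y) (hf : QuasiEmb f), IsEmb f → IsEmb (map f hf)
  supp_finite : ∀ {X : POrd.{u}} (σ : obj X), (supp σ).Finite
  supp_natural : ∀ {X Y : POrd.{u}} (f : X → Y) (hf : QuasiEmb f) (σ : obj X),
      supp (map f hf σ) = f '' supp σ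
  supp_cond : ∀ {X Y : POrd.{u}} (f : X → Y) (hf : QuasiEmb f), IsEmb f →
      ∀ σ : obj Y, supp σ ⊆ Set.range f → σ ∈ Set.range (map f hf)

/-- Normality of a PO-dilator. -/
def PODilator.IsNormal (W : PODilator.{u}) : Prop :=
  ∀ (X : POrd.{u}) (σ τ : W.obj X), σ ≤ τ → LeFin (W.supp σ) (W.supp τ)

/-- Well partial orders. -/
def IsWpo (X : Type*) [PartialOrder X] : Prop :=
  ∀ f : ℕ → X, ∃ i j : ℕ, i < j ∧ f i ≤ f j

/-- A WPO-dilator preserves well partial orders. -/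
def PODilator.IsWPO (W : PODilator.{u}) : Prop :=
  ∀ X : POrd.{u}, IsWpo X → IsWpo (W.obj X)

/-- Kruskal fixed point of `W` over `X`. -/
structure IsKruskalFP (W : PODilator.{u}) (X Z : POrd.{u})
    (ι : X → Z) (κ : W.obj Z → Z) : Prop where
  range_disjoint : Set.range ι ∩ Set.range κ = ∅
  iota_le : ∀ x y : X, ι x ≤ ι y → x ≤ y
  iota_kappa : ∀ (x : X) (τ : W.obj Z), ι x ≤ κ τ ↔ ∃ z ∈ W.supp τ, ι x ≤ z
  kappa_iota : ∀ (σ : W.obj Z) (y : X), ¬ κ σ ≤ ι y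
  kappa_kappa : ∀ σ τ : W.obj Z, κ σ ≤ κ τ ↔ (σ ≤ τ ∨ ∃ z ∈ W.supp τ, κ σ ≤ z)

/-- Condition (i) of Theorem 3.5. -/
structure KFPCondI (W : PODilator.{u}) (X Z : POrd.{u})
    (ι : X → Z) (κ : W.obj Z → Z) : Prop where
  range_union : Set.range ι ∪ Set.range κ = Set.univ
  iota_mono : ∀ x y : X, x ≤ y → ι x ≤ ι y
  height : ∃ h : Z → ℕ, ∀ (s : Z) (σ : W.obj Z), s ∈ W.supp σ → h s < h (κ σ)

/-- Initial Kruskal fixed points. -/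
def IsInitialKFP (W : PODilator.{u}) (X Z : POrd.{u})
    (ι : X → Z) (κ : W.obj Z → Z) : Prop :=
  IsKruskalFP W X Z ι κ ∧
  ∀ (Z' : POrd.{u}) (ι' : X → Z') (κ' : W.obj Z' → Z'), IsKruskalFP W X Z' ι' κ' →
    ∃! f : Z → Z', ∃ hf : QuasiEmb f, f ∘ ι = ι' ∧ f ∘ κ = κ' ∘ W.map f hf

theorem IsEmb.quasi {X Y : Type*} [PartialOrder X] [PartialOrder Y] {f : X → Y} (h : IsEmb f) :
    QuasiEmb f := fun x y hxy => (h x y).2 hxy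

theorem IsEmb.inj {X Y : Type*} [PartialOrder X] [PartialOrder Y] {f : X → Y} (h : IsEmb f) :
    Function.Injective f := fun x y hxy =>
  le_antisymm ((h x y).2 hxy.le) ((h y x).2 hxy.ge)

/-- One step of the iterative construction. -/
structure Good (W : PODilator.{u}) (X Z Y : POrd.{u}) (e : Z → Y) (i : X → Y)
    (k : W.obj Z → Y) : Prop where
  emb : IsEmb e
  surj : ∀ y : Y, (∃ x, y = i x) ∨ ∃ σ, y = k σ
  ii : ∀ x y, i x ≤ i y ↔ x ≤ y
  ik : ∀ x τ, i x ≤ k τ ↔ ∃ z ∈ W.supp τ, i x ≤ e z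
  ki : ∀ σ y, ¬ k σ ≤ i y
  kk : ∀ σ τ, k σ ≤ k τ ↔ (σ ≤ τ ∨ ∃ z ∈ W.supp τ, k σ ≤ e z)
  lt : ∀ s ρ, s ∈ W.supp ρ → e s < k ρ

theorem Good.kinj {W : PODilator.{u}} {X Z Y : POrd.{u}} {e : Z → Y} {i : X → Y}
    {k : W.obj Z → Y} (g : Good W X Z Y e i k) : Function.Injective k := by
  have key : ∀ σ τ, k σ = k τ → σ ≤ τ := by
    intro σ τ h
    rcases (g.kk σ τ).1 h.le with h' | ⟨z, hz, hle⟩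
    · exact h'
    · exact absurd (h ▸ hle) (not_le_of_gt (g.lt z τ hz))
  exact fun σ τ h => le_antisymm (key _ _ h) (key _ _ h.symm)

inductive Nx (A B : Type u) : Type u
  | i : A → Nx A B
  | k : B → Nx A B

/-- `σ` lies below `z` in the next step. -/
def LL (W : PODilator.{u}) {Z Y : POrd.{u}} (e : Z → Y) (he : QuasiEmb e)
    (k : W.obj Z → Y) (σ : W.obj Y) (z : Y) : Prop :=
  ∃ ρ : W.obj Z, k ρ ≤ z ∧ σ ≤ W.map e he ρ

def NxLe (W : PODilator.{u}) {X Z Y : POrd.{u}} (e : Z → Y) (he : QuasiEmb e) (i : X → Y)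
    (k : W.obj Z → Y) : Nx X (W.obj Y) → Nx X (W.obj Y) → Prop
  | .i x, .i y => x ≤ y
  | .i x, .k τ => ∃ z ∈ W.supp τ, i x ≤ z
  | .k _, .i _ => False
  | .k σ, .k τ => σ ≤ τ ∨ ∃ z ∈ W.supp τ, LL W e he k σ z

section
variable {W : PODilator.{u}} {X Z Y : POrd.{u}} {e : Z → Y} {i : X → Y}
    {k : W.obj Z → Y}

theorem Good.below (g : Good W X Z Y e i k) (hW : W.IsNormal) {τ : W.obj Y} {z w : Y} (hz : z ∈ W.supp τ)
    (h : LL W e g.emb.quasi k τ w) : z < w := by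
  obtain ⟨ρ, h1, h2⟩ := h
  obtain ⟨y, hy, hzy⟩ := hW _ _ _ h2 z hz
  rw [W.supp_natural] at hy
  obtain ⟨s, hs, rfl⟩ := hy
  exact hzy.trans_lt ((g.lt s ρ hs).trans_le h1)

theorem Good.le_trans' (g : Good W X Z Y e i k) (hW : W.IsNormal) (a b c : Nx X (W.obj Y)) (hab : NxLe W e g.emb.quasi i k a b)
    (hbc : NxLe W e g.emb.quasi i k b c) : NxLe W e g.emb.quasi i k a c := by
  rcases a with x | σ <;> rcases b with y | τ <;> rcases c with w | υ <;>
    simp only [NxLe] at hab hbc ⊢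
  · exact le_trans hab hbc
  · obtain ⟨z, hz, h⟩ := hbc
    exact ⟨z, hz, ((g.ii _ _).2 hab).trans h⟩
  · obtain ⟨z, hz, h⟩ := hab
    rcases hbc with hbc | ⟨w, hw, hbc⟩
    · obtain ⟨z', hz', hh⟩ := hW _ _ _ hbc z hz
      exact ⟨z', hz', h.trans hh⟩
    · exact ⟨w, hw, h.trans (g.below hW hz hbc).le⟩
  · rcases hab with hab | ⟨z, hz, ρ, h1, h2⟩
    · rcases hbc with hbc | ⟨w, hw, ρ, h1, h2⟩
      · exact Or.inl (hab.trans hbc)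
      · exact Or.inr ⟨w, hw, ρ, h1, hab.trans h2⟩
    · right
      rcases hbc with hbc | ⟨w, hw, hbc⟩
      · obtain ⟨z', hz', hh⟩ := hW _ _ _ hbc z hz
        exact ⟨z', hz', ρ, h1.trans hh, h2⟩
      · exact ⟨w, hw, ρ, h1.trans (g.below hW hz hbc).le, h2⟩

theorem Good.le_antisymm' (g : Good W X Z Y e i k) (hW : W.IsNormal) (a b : Nx X (W.obj Y)) (hab : NxLe W e g.emb.quasi i k a b)
    (hba : NxLe W e g.emb.quasi i k b a) : a = b := by
  rcases a with x | σ <;> rcases b with y | τ <;>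
    simp only [NxLe] at hab hba
  · rw [le_antisymm hab hba]
  · rcases hab with hab | ⟨z, hz, hab⟩
    · rcases hba with hba | ⟨w, hw, hba⟩
      · rw [le_antisymm hab hba]
      · obtain ⟨z', hz', hh⟩ := hW _ _ _ hab w hw
        exact absurd hh (not_le_of_gt (g.below hW hz' hba))
    · rcases hba with hba | ⟨w, hw, hba⟩
      · obtain ⟨z', hz', hh⟩ := hW _ _ _ hba z hz
        exact absurd hh (not_le_of_gt (g.below hW hz' hab))
      · exact absurd (g.below hW hz hba) (g.below hW hw hab).asymm

theorem Good.next (g : Good W X Z Y e i k) (hW : W.IsNormal) : ∃ (Y' : POrd.{u}) (e' : Y → Y') (i' : X → Y') (k' : W.obj Y → Y'),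
    Good W X Y Y' e' i' k' ∧ (∀ x, e' (i x) = i' x) ∧
      ∀ σ, e' (k σ) = k' (W.map e g.emb.quasi σ) := by
  let P : PartialOrder (Nx X (W.obj Y)) :=
    { le := NxLe W e g.emb.quasi i k
      le_refl := by
        rintro (x | σ)
        · exact le_refl x
        · exact Or.inl (le_refl σ)
      le_trans := g.le_trans' hW
      le_antisymm := g.le_antisymm' hW }
  let Y' : POrd.{u} := @POrd.mk (Nx X (W.obj Y)) P
  let i' : X → Y' := Nx.i
  let k' : W.obj Y → Y' := Nx.k
  have Lii : ∀ x y, i' x ≤ i' y ↔ x ≤ y := fun x y => Iff.rfl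
  have Lik : ∀ x τ, i' x ≤ k' τ ↔ ∃ z ∈ W.supp τ, i x ≤ z := fun x y => Iff.rfl
  have Lki : ∀ σ y, ¬ k' σ ≤ i' y := fun x y h => h
  have Lkk : ∀ σ τ, k' σ ≤ k' τ ↔ (σ ≤ τ ∨ ∃ z ∈ W.supp τ, LL W e g.emb.quasi k σ z) :=
    fun x y => Iff.rfl
  have Lsurj : ∀ y : Y', (∃ x, y = i' x) ∨ ∃ σ, y = k' σ := by
    rintro (x | σ)
    · exact Or.inl ⟨x, rfl⟩
    · exact Or.inr ⟨σ, rfl⟩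
  have hex : ∀ y : Y, ∃ n : Y', (∀ x, y = i x → n = i' x) ∧
      ∀ σ, y = k σ → n = k' (W.map e g.emb.quasi σ) := by
    intro y
    rcases g.surj y with ⟨x, rfl⟩ | ⟨σ, rfl⟩
    · refine ⟨i' x, fun x' h => ?_, fun σ h => absurd h.ge (g.ki _ _)⟩
      rw [le_antisymm ((g.ii _ _).1 h.le) ((g.ii _ _).1 h.ge)]
    · refine ⟨k' (W.map e g.emb.quasi σ), fun x h => absurd h.le (g.ki _ _), fun τ h => ?_⟩
      rw [g.kinj h]
  choose e' he1 he2 using hex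
  have ei : ∀ x, e' (i x) = i' x := fun x => he1 _ x rfl
  have ek : ∀ σ, e' (k σ) = k' (W.map e g.emb.quasi σ) := fun σ => he2 _ σ rfl
  clear_value i' k'
  have We := W.map_emb e g.emb.quasi g.emb
  -- `LL` describes the order
  have hLk : ∀ σ z, LL W e g.emb.quasi k (W.map e g.emb.quasi σ) z ↔ k σ ≤ z := by
    intro σ z
    constructor
    · rintro ⟨ρ, h1, h2⟩
      exact ((g.kk _ _).2 (Or.inl ((We _ _).2 h2))).trans h1
    · intro h
      exact ⟨σ, h, le_refl _⟩
  have hL : ∀ σ z, LL W e g.emb.quasi k σ z ↔ k' σ ≤ e' z := by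
    intro σ z
    rcases g.surj z with ⟨x, rfl⟩ | ⟨τ, rfl⟩
    · rw [ei]
      exact ⟨fun ⟨ρ, h1, _⟩ => absurd h1 (g.ki _ _), fun h => absurd h (Lki _ _)⟩
    · rw [ek, Lkk, W.supp_natural]
      constructor
      · rintro ⟨ρ, h1, h2⟩
        rcases (g.kk _ _).1 h1 with h | ⟨t, ht, h⟩
        · exact Or.inl (h2.trans ((We _ _).1 h))
        · exact Or.inr ⟨e t, ⟨t, ht, rfl⟩, ρ, h, h2⟩
      · rintro (h | ⟨_, ⟨t, ht, rfl⟩, ρ, h1, h2⟩)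
        · exact ⟨τ, le_refl _, h⟩
        · exact ⟨ρ, h1.trans (g.lt _ _ ht).le, h2⟩
  have hI : ∀ x z, i x ≤ z ↔ i' x ≤ e' z := by
    intro x z
    rcases g.surj z with ⟨y, rfl⟩ | ⟨τ, rfl⟩
    · rw [ei, Lii, g.ii]
    · rw [ek, Lik, g.ik, W.supp_natural]
      simp
  refine ⟨Y', e', i', k', ?_, ei, ek⟩
  refine ⟨?_, Lsurj, Lii, ?_, Lki, ?_, ?_⟩
  · intro a b
    rcases g.surj a with ⟨x, rfl⟩ | ⟨σ, rfl⟩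
    · rw [ei, hI]
    · rw [ek, ← hL, hLk]
  · intro x τ
    simp only [Lik, hI]
  · intro σ τ
    simp only [Lkk, hL]
  · intro s ρ hs
    have hno : ¬ k' ρ ≤ e' s := by
      rw [← hL]
      intro h
      exact lt_irrefl _ (g.below hW hs h)
    refine lt_of_le_not_ge ?_ hno
    rcases g.surj s with ⟨x, rfl⟩ | ⟨σ, rfl⟩
    · rw [ei, Lik]
      exact ⟨_, hs, le_refl _⟩
    · rw [ek, Lkk]
      exact Or.inr ⟨_, hs, (hLk _ _).2 (le_refl _)⟩

end

theorem good_base (W : PODilator.{u}) (X : POrd.{u}) : ∃ (Z Y : POrd.{u}) (e : Z → Y) (i : X → Y)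
    (k : W.obj Z → Y), IsEmpty Z ∧ Good W X Z Y e i k := by
  let Z : POrd.{u} := POrd.of PEmpty.{u+1}
  have hZ : IsEmpty Z := inferInstanceAs (IsEmpty PEmpty)
  let Y : POrd.{u} := POrd.of (X.carrier ⊕ (W.obj Z).carrier)
  refine ⟨Z, Y, fun z => (hZ.false z).elim, Sum.inl, Sum.inr, hZ, ?_⟩
  refine ⟨fun z => (hZ.false z).elim, ?_, ?_, ?_, ?_, ?_, fun z => (hZ.false z).elim⟩
  · rintro (x | σ)
    · exact Or.inl ⟨x, rfl⟩
    · exact Or.inr ⟨σ, rfl⟩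
  · intro x y
    exact Sum.inl_le_inl_iff
  · intro x τ
    exact ⟨fun h => (Sum.not_inl_le_inr h).elim, fun ⟨z, _⟩ => (hZ.false z).elim⟩
  · intro σ y
    exact Sum.not_inr_le_inl
  · intro σ τ
    exact ⟨fun h => Or.inl (Sum.inr_le_inr_iff.1 h), fun h => h.elim (fun h => Sum.inr_le_inr_iff.2 h)
      (fun ⟨z, _⟩ => (hZ.false z).elim)⟩

structure Stage (W : PODilator.{u}) (X : POrd.{u}) where
  Z : POrd.{u}
  Y : POrd.{u}
  e : Z → Y
  i : X → Y
  k : W.obj Z → Y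
  good : Good W X Z Y e i k

theorem Stage.exists_next {W : PODilator.{u}} (hW : W.IsNormal) {X : POrd.{u}} (S : Stage W X) :
    ∃ (Y' : POrd.{u}) (e' : S.Y → Y') (i' : X → Y') (k' : W.obj S.Y → Y'),
    Good W X S.Y Y' e' i' k' ∧ (∀ x, e' (S.i x) = i' x) ∧
      ∀ σ, e' (S.k σ) = k' (W.map S.e S.good.emb.quasi σ) := S.good.next hW

theorem exists_seq (W : PODilator.{u}) (hW : W.IsNormal) (X : POrd.{u}) :
    ∃ (Z : ℕ → POrd.{u}) (e : ∀ n, Z n → Z (n+1)) (i : ∀ n, X → Z (n+1))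
      (k : ∀ n, W.obj (Z n) → Z (n+1)) (g : ∀ n, Good W X (Z n) (Z (n+1)) (e n) (i n) (k n)),
      IsEmpty (Z 0) ∧ (∀ n x, e (n+1) (i n x) = i (n+1) x) ∧
      ∀ n σ, e (n+1) (k n σ) = k (n+1) (W.map (e n) (g n).emb.quasi σ) := by
  obtain ⟨Z0, Y0, e0, i0, k0, hE, g0⟩ := good_base W X
  choose nY ne ni nk ng n1 n2 using fun S : Stage W X => S.exists_next hW
  let S : ℕ → Stage W X := fun n =>
    Nat.rec ⟨Z0, Y0, e0, i0, k0, g0⟩ (fun _ S => ⟨S.Y, nY S, ne S, ni S, nk S, ng S⟩) n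
  exact ⟨fun n => (S n).Z, fun n => (S n).e, fun n => (S n).i, fun n => (S n).k,
    fun n => (S n).good, hE, fun n x => n1 (S n) x, fun n σ => n2 (S n) σ⟩

structure Sg (Z : ℕ → POrd.{u}) : Type u where
  fst : ℕ
  snd : Z fst

/-- Direct limit of a chain of embeddings. -/
theorem exists_limit (Z : ℕ → POrd.{u}) (e : ∀ n, Z n → Z (n+1)) (he : ∀ n, IsEmb (e n)) :
    ∃ (L : POrd.{u}) (j : ∀ n, Z n → L), (∀ n, IsEmb (j n)) ∧
      (∀ n a, j (n+1) (e n a) = j n a) ∧ ∀ z, ∃ n a, z = j n a := by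
  let f : ∀ n m, n ≤ m → Z n → Z m := fun n m h a =>
    Nat.leRecOn (C := fun n => (Z n).carrier) h (fun {k} => e k) a
  have f_self : ∀ n a, f n n le_rfl a = a := fun n a =>
    Nat.leRecOn_self (C := fun n => (Z n).carrier) (next := fun {k} => e k) a
  have f_succ : ∀ n m (h : n ≤ m) (h' : n ≤ m + 1) a, f n (m+1) h' a = e m (f n m h a) :=
    fun n m h h' a => Nat.leRecOn_succ (C := fun n => (Z n).carrier) (next := fun {k} => e k) h a
  clear_value f
  have f_emb : ∀ n m (h : n ≤ m), IsEmb (f n m h) := by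
    intro n m h
    induction m, h using Nat.le_induction with
    | base => intro a b; rw [f_self, f_self]
    | succ m h ih => intro a b; rw [f_succ n m h, f_succ n m h, ← he m, ih a b]
  have f_trans : ∀ n m l (h : n ≤ m) (h' : m ≤ l) a,
      f m l h' (f n m h a) = f n l (h.trans h') a := by
    intro n m l h h' a
    induction l, h' using Nat.le_induction with
    | base => rw [f_self]
    | succ l h' ih => rw [f_succ m l h', f_succ n l (h.trans h'), ih]
  let le : Sg Z → Sg Z → Prop := fun a b =>
    ∃ m, ∃ (h : a.fst ≤ m) (h' : b.fst ≤ m), f _ m h a.snd ≤ f _ m h' b.snd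
  have le_all : ∀ a b, le a b → ∀ m (h : a.fst ≤ m) (h' : b.fst ≤ m), f _ m h a.snd ≤ f _ m h' b.snd := by
    rintro a b ⟨m, h, h', hab⟩ l hl hl'
    rw [f_emb m (max m l) (le_max_left _ _), f_trans, f_trans] at hab
    rw [f_emb l (max m l) (le_max_right _ _), f_trans, f_trans]
    exact hab
  let P : Preorder (Sg Z) :=
    { le := le
      le_refl := fun a => ⟨a.fst, le_rfl, le_rfl, le_rfl⟩
      le_trans := by
        intro a b c hab hbc
        have h1 : a.fst ≤ max a.fst (max b.fst c.fst) := by omega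
        have h2 : b.fst ≤ max a.fst (max b.fst c.fst) := by omega
        have h3 : c.fst ≤ max a.fst (max b.fst c.fst) := by omega
        exact ⟨_, h1, h3, (le_all _ _ hab _ h1 h2).trans (le_all _ _ hbc _ h2 h3)⟩ }
  have Ple : ∀ a b : Sg Z, a ≤ b ↔ le a b := fun a b => Iff.rfl
  refine ⟨POrd.of (Antisymmetrization (Sg Z) (· ≤ ·)),
    fun n a => toAntisymmetrization (· ≤ ·) ⟨n, a⟩, ?_, ?_, ?_⟩
  · intro n a b
    have : le ⟨n, a⟩ ⟨n, b⟩ ↔ a ≤ b := by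
      constructor
      · intro h
        have := le_all _ _ h n le_rfl le_rfl
        simpa only [f_self] using this
      · intro h
        exact ⟨n, le_rfl, le_rfl, by simpa only [f_self] using h⟩
    rw [← this]
    exact (toAntisymmetrization_le_toAntisymmetrization_iff (α := Sg Z) (a := ⟨n, a⟩) (b := ⟨n, b⟩)).symm
  · intro n a
    have h1 : f n (n+1) (Nat.le_succ n) a = e n a := by
      rw [f_succ n n le_rfl, f_self]
    refine Quotient.sound ⟨?_, ?_⟩
    · refine ⟨n+1, le_rfl, Nat.le_succ n, ?_⟩
      exact (by rw [f_self, h1] : f (n+1) (n+1) le_rfl (e n a) = f n (n+1) (Nat.le_succ n) a).le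
    · refine ⟨n+1, Nat.le_succ n, le_rfl, ?_⟩
      exact (by rw [f_self, h1] : f (n+1) (n+1) le_rfl (e n a) = f n (n+1) (Nat.le_succ n) a).ge
  · intro z
    induction z using Quotient.inductionOn with
    | h a => exact ⟨a.fst, a.snd, rfl⟩

theorem map_map_eq (W : PODilator.{u}) {A B C : POrd.{u}} (f : A → B) (g : B → C) (h : A → C)
    (hf : QuasiEmb f) (hg : QuasiEmb g) (hh : QuasiEmb h) (H : ∀ a, g (f a) = h a) (σ : W.obj A) :
    W.map g hg (W.map f hf σ) = W.map h hh σ := by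
  obtain rfl : g ∘ f = h := funext H
  exact (congrFun (W.map_comp f g hf hg) σ).symm

/-- For every normal PO-dilator `W` and partial order `X` there is a Kruskal fixed
point of `W` over `X` satisfying condition (i). -/
theorem exists_kruskalFP_condI (W : PODilator.{u}) (hW : W.IsNormal) (X : POrd.{u}) :
    ∃ (Z : POrd.{u}) (ι : X → Z) (κ : W.obj Z → Z),
      IsKruskalFP W X Z ι κ ∧ KFPCondI W X Z ι κ := by
  obtain ⟨Z, e, i, k, g, hE, hi, hk⟩ := exists_seq W hW X
  obtain ⟨L, j, hj, hje, hsurj⟩ := exists_limit Z e (fun n => (g n).emb)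
  -- lifting elements
  have lift : ∀ n m, n ≤ m → ∀ a, ∃ b, j m b = j n a := by
    intro n m h a
    induction m, h using Nat.le_induction with
    | base => exact ⟨a, rfl⟩
    | succ m h ih =>
      obtain ⟨b, hb⟩ := ih
      exact ⟨e m b, by rw [hje, hb]⟩
  have jq := fun n => (hj n).quasi
  have Wj := fun n => W.map_emb (j n) (jq n) (hj n)
  have liftW : ∀ n m, n ≤ m → ∀ σ, ∃ τ, W.map (j m) (jq m) τ = W.map (j n) (jq n) σ ∧
      j (m+1) (k m τ) = j (n+1) (k n σ) := by
    intro n m h σ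
    induction m, h using Nat.le_induction with
    | base => exact ⟨σ, rfl, rfl⟩
    | succ m h ih =>
      obtain ⟨τ, h1, h2⟩ := ih
      refine ⟨W.map (e m) (g m).emb.quasi τ, ?_, ?_⟩
      · rw [map_map_eq W (e m) (j (m+1)) (j m) _ _ (jq m) (hje m), h1]
      · rw [← hk, hje, h2]
  have rep : ∀ σ : W.obj L, ∃ n τ, W.map (j n) (jq n) τ = σ := by
    intro σ
    have : ∃ n, W.supp σ ⊆ Set.range (j n) := by
      have hf := W.supp_finite σ
      generalize W.supp σ = s at hf
      induction s, hf using Set.Finite.induction_on with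
      | empty => exact ⟨0, Set.empty_subset _⟩
      | @insert a s _ _ ih =>
        obtain ⟨n, hn⟩ := ih
        obtain ⟨m, b, rfl⟩ := hsurj a
        refine ⟨max n m, Set.insert_subset ?_ ?_⟩
        · exact lift m _ (le_max_right _ _) b
        · intro x hx
          obtain ⟨c, rfl⟩ := hn hx
          exact lift n _ (le_max_left _ _) c
    obtain ⟨n, hn⟩ := this
    exact ⟨n, W.supp_cond (j n) (jq n) (hj n) σ hn⟩
  choose N R hR using rep
  let κ : W.obj L → L := fun σ => j (N σ + 1) (k (N σ) (R σ))
  let ι : X → L := fun x => j 1 (i 0 x)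
  have κ_eq : ∀ n σ, κ (W.map (j n) (jq n) σ) = j (n+1) (k n σ) := by
    intro n σ
    have h0 := hR (W.map (j n) (jq n) σ)
    obtain ⟨a, ha, ha'⟩ := liftW n (max n (N (W.map (j n) (jq n) σ))) (le_max_left _ _) σ
    obtain ⟨b, hb, hb'⟩ := liftW (N (W.map (j n) (jq n) σ))
      (max n (N (W.map (j n) (jq n) σ))) (le_max_right _ _) (R (W.map (j n) (jq n) σ))
    have hab : a = b := (Wj _).inj (by rw [ha, hb, h0])
    show j (N _ + 1) (k _ (R _)) = _
    rw [← ha', ← hb', hab]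
  have ι_eq : ∀ n x, ι x = j (n+1) (i n x) := by
    intro n x
    induction n with
    | zero => rfl
    | succ n ih => rw [ih, ← hi, hje]
  have rep1 : ∀ σ : W.obj L, ∃ n a, σ = W.map (j n) (jq n) a := fun σ => ⟨_, _, (hR σ).symm⟩
  have rep2 : ∀ σ τ : W.obj L, ∃ n a b, σ = W.map (j n) (jq n) a ∧ τ = W.map (j n) (jq n) b := by
    intro σ τ
    obtain ⟨a, ha, -⟩ := liftW (N σ) (max (N σ) (N τ)) (le_max_left _ _) (R σ)
    obtain ⟨b, hb, -⟩ := liftW (N τ) (max (N σ) (N τ)) (le_max_right _ _) (R τ)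
    exact ⟨_, a, b, by rw [ha, hR], by rw [hb, hR]⟩
  clear_value κ ι
  have κ_inj : Function.Injective κ := by
    intro σ τ h
    obtain ⟨n, a, b, rfl, rfl⟩ := rep2 σ τ
    rw [κ_eq, κ_eq] at h
    rw [(g n).kinj ((hj _).inj h)]
  have kappa_iota : ∀ σ y, ¬ κ σ ≤ ι y := by
    intro σ y h
    obtain ⟨n, a, rfl⟩ := rep1 σ
    rw [κ_eq, ι_eq n, ← hj] at h
    exact (g n).ki _ _ h
  refine ⟨L, ι, κ, ⟨?_, ?_, ?_, kappa_iota, ?_⟩, ⟨?_, ?_, ?_⟩⟩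
  · ext z
    simp only [Set.mem_inter_iff, Set.mem_range, Set.mem_empty_iff_false, iff_false, not_and]
    rintro ⟨x, rfl⟩ ⟨σ, hσ⟩
    exact kappa_iota _ _ hσ.le
  · intro x y h
    rw [ι_eq 0, ι_eq 0, ← hj, (g 0).ii] at h
    exact h
  · intro x τ
    obtain ⟨n, a, rfl⟩ := rep1 τ
    rw [κ_eq, ι_eq n, ← hj, (g n).ik, W.supp_natural, Set.exists_mem_image]
    simp only [hj (n+1) _ _, hje]
  · intro σ τ
    obtain ⟨n, a, b, rfl, rfl⟩ := rep2 σ τ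
    rw [κ_eq, κ_eq, ← hj, (g n).kk, W.supp_natural, Set.exists_mem_image, ← Wj n]
    simp only [hj (n+1) _ _, hje]
  · ext z
    simp only [Set.mem_union, Set.mem_range, Set.mem_univ, iff_true]
    obtain ⟨n, a, rfl⟩ := hsurj z
    rw [← hje]
    rcases (g n).surj (e n a) with ⟨x, h⟩ | ⟨σ, h⟩
    · exact Or.inl ⟨x, by rw [h, ι_eq n]⟩
    · exact Or.inr ⟨W.map (j n) (jq n) σ, by rw [h, κ_eq]⟩
  · intro x y h
    rw [ι_eq 0, ι_eq 0, ← hj, (g 0).ii]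
    exact h
  · classical
    have hs' : ∀ z, ∃ n, ∃ a, z = j n a := hsurj
    refine ⟨fun z => Nat.find (hs' z), ?_⟩
    intro s σ hs
    show Nat.find (hs' s) < Nat.find (hs' (κ σ))
    obtain ⟨a, ha⟩ := Nat.find_spec (hs' (κ σ))
    generalize Nat.find (hs' (κ σ)) = M at a ha
    cases M with
    | zero => exact (hE.false a).elim
    | succ m =>
      rcases (g m).surj a with ⟨x, rfl⟩ | ⟨τ, rfl⟩
      · rw [← ι_eq] at ha
        exact absurd ha.le (kappa_iota _ _)
      · rw [← κ_eq] at ha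
        obtain rfl := κ_inj ha
        rw [W.supp_natural] at hs
        obtain ⟨t, _, rfl⟩ := hs
        exact Nat.lt_succ_of_le (Nat.find_min' _ ⟨t, rfl⟩)
end

section
/- Let (Z, ι, κ) be a Kruskal fixed point of a normal PO-dilator W over a partial order X. Then (Z, ι, κ) satisfies condition (i) if and only if (Z, ι, κ) is initial. -/
universe u

namespace KFPaux

variable {W : PODilator.{u}}

theorem quasi_inj {X Y : Type*} [PartialOrder X] [PartialOrder Y] {f : X → Y}
    (hf : QuasiEmb f) : Function.Injective f := fun x y h =>
  le_antisymm (hf _ _ h.le) (hf _ _ h.ge)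

theorem map_comp' {X Y Z : POrd.{u}} {f : X → Y} {g : Y → Z} {k : X → Z}
    (hf : QuasiEmb f) (hg : QuasiEmb g) (hk : QuasiEmb k) (h : ∀ x, g (f x) = k x)
    (σ : W.obj X) : W.map g hg (W.map f hf σ) = W.map k hk σ := by
  have : k = g ∘ f := by funext x; exact (h x).symm
  subst this
  rw [W.map_comp f g hf hg]; rfl

theorem map_inj {X Y : POrd.{u}} {f : X → Y} (hf : QuasiEmb f) {σ τ : W.obj X}
    (h : W.map f hf σ = W.map f hf τ) : σ = τ := quasi_inj (W.map_quasiEmb f hf) h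

/-- Suborder. -/
def subPO (Z : POrd.{u}) (p : Z → Prop) : POrd.{u} := ⟨{z : Z // p z}⟩

def sval {Z : POrd.{u}} {p : Z → Prop} : subPO Z p → Z := Subtype.val

theorem sval_emb {Z : POrd.{u}} {p : Z → Prop} : IsEmb (sval (Z := Z) (p := p)) :=
  fun _ _ => Iff.rfl

theorem sval_q {Z : POrd.{u}} {p : Z → Prop} : QuasiEmb (sval (Z := Z) (p := p)) :=
  fun _ _ h => h

theorem lift_sub {Z : POrd.{u}} {p : Z → Prop} (σ : W.obj Z) (h : ∀ s ∈ W.supp σ, p s) :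
    ∃ σ0 : W.obj (subPO Z p), W.map sval sval_q σ0 = σ :=
  W.supp_cond sval sval_q sval_emb σ fun s hs => ⟨⟨s, h s hs⟩, rfl⟩

theorem map_congr_supp {Z Y : POrd.{u}} {f g : Z → Y} (hf : QuasiEmb f) (hg : QuasiEmb g)
    (σ : W.obj Z) (h : ∀ s ∈ W.supp σ, f s = g s) : W.map f hf σ = W.map g hg σ := by
  obtain ⟨σ0, e⟩ := lift_sub (p := fun s => s ∈ W.supp σ) σ (fun s hs => hs)
  have h' : ∀ x : subPO Z _, f (sval x) = g (sval x) := fun x => h x.1 x.2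
  have e' : W.map f hf (W.map sval sval_q σ0) = W.map g hg (W.map sval sval_q σ0) := by
    rw [map_comp' sval_q hf (sval_q.comp hf) (fun _ => rfl),
      map_comp' sval_q hg (sval_q.comp hf) (fun x => (h' x).symm)]
  rwa [e] at e'

section Basic

variable {X Z : POrd.{u}} {ι : X → Z} {κ : W.obj Z → Z}

theorem iota_inj (hK : IsKruskalFP W X Z ι κ) {x y : X} (h : ι x = ι y) : x = y :=
  le_antisymm (hK.iota_le _ _ h.le) (hK.iota_le _ _ h.ge)

theorem iota_ne_kappa (hK : IsKruskalFP W X Z ι κ) {x : X} {σ : W.obj Z} : ι x ≠ κ σ := by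
  intro h
  have : ι x ∈ Set.range ι ∩ Set.range κ := ⟨⟨x, rfl⟩, ⟨σ, h.symm⟩⟩
  rw [hK.range_disjoint] at this
  exact this

theorem le_kappa (hK : IsKruskalFP W X Z ι κ) (hu : Set.range ι ∪ Set.range κ = Set.univ)
    {s : Z} {σ : W.obj Z} (hs : s ∈ W.supp σ) : s ≤ κ σ := by
  have : s ∈ Set.range ι ∪ Set.range κ := hu ▸ Set.mem_univ s
  rcases this with ⟨x, rfl⟩ | ⟨τ, rfl⟩
  · exact (hK.iota_kappa _ _).2 ⟨_, hs, le_rfl⟩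
  · exact (hK.kappa_kappa _ _).2 (Or.inr ⟨_, hs, le_rfl⟩)

theorem kappa_inj (hK : IsKruskalFP W X Z ι κ) (hu : Set.range ι ∪ Set.range κ = Set.univ)
    {h : Z → ℕ} (hh : ∀ (s : Z) (σ : W.obj Z), s ∈ W.supp σ → h s < h (κ σ))
    {σ τ : W.obj Z} (e : κ σ = κ τ) : σ = τ := by
  have key : ∀ σ τ : W.obj Z, κ σ = κ τ → σ ≤ τ := by
    intro σ τ e
    rcases (hK.kappa_kappa _ _).1 e.le with h1 | ⟨z, hz, hle⟩
    · exact h1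
    · exfalso
      have : z = κ τ := le_antisymm (le_kappa hK hu hz) (e ▸ hle)
      have h2 := hh _ _ hz
      rw [this] at h2
      exact lt_irrefl _ h2
  exact le_antisymm (key _ _ e) (key _ _ e.symm)

end Basic

section Forward

variable {X Z Z' : POrd.{u}} {ι : X → Z} {κ : W.obj Z → Z} {ι' : X → Z'} {κ' : W.obj Z' → Z'}

structure Stage (ι : X → Z) (κ : W.obj Z → Z) (ι' : X → Z') (κ' : W.obj Z' → Z')
    (h : Z → ℕ) (n : ℕ) (f : subPO Z (fun z => h z < n) → Z') : Prop where
  quasi : QuasiEmb f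
  iota : ∀ x hx, f ⟨ι x, hx⟩ = ι' x
  kappa : ∀ (σ : W.obj (subPO Z (fun z => h z < n))) hσ,
    f ⟨κ (W.map sval sval_q σ), hσ⟩ = κ' (W.map f quasi σ)

theorem stage_step (hK : IsKruskalFP W X Z ι κ) (hI : KFPCondI W X Z ι κ)
    (hK' : IsKruskalFP W X Z' ι' κ') {h : Z → ℕ}
    (hh : ∀ (s : Z) (σ : W.obj Z), s ∈ W.supp σ → h s < h (κ σ)) (n : ℕ)
    (f : subPO Z (fun z => h z < n) → Z') (hf : Stage ι κ ι' κ' h n f) :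
    ∃ f' : subPO Z (fun z => h z < n + 1) → Z', Stage ι κ ι' κ' h (n+1) f' ∧
      ∀ z (hz : h z < n), f' ⟨z, Nat.lt_succ_of_lt hz⟩ = f ⟨z, hz⟩ := by
  have hu := hI.range_union
  have cas : ∀ z : subPO Z (fun z => h z < n + 1), (∃ x, z.1 = ι x) ∨
      ∃ σ : W.obj (subPO Z (fun z => h z < n)), z.1 = κ (W.map sval sval_q σ) := by
    intro z
    have : z.1 ∈ Set.range ι ∪ Set.range κ := hu ▸ Set.mem_univ _
    rcases this with ⟨x, hx⟩ | ⟨τ, hτ⟩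
    · exact Or.inl ⟨x, hx.symm⟩
    · right
      obtain ⟨σ, hσ⟩ := lift_sub (p := fun z => h z < n) τ (fun s hs => by
        have h1 := hh _ _ hs
        have h2 := z.2
        rw [hτ] at h1
        omega)
      exact ⟨σ, by rw [hσ, hτ]⟩
  have ex : ∀ z : subPO Z (fun z => h z < n + 1), ∃ w : Z', (∀ x, z.1 = ι x → w = ι' x) ∧
      ∀ σ : W.obj (subPO Z (fun z => h z < n)), z.1 = κ (W.map sval sval_q σ) →
        w = κ' (W.map f hf.quasi σ) := by
    intro z
    rcases cas z with ⟨x, hx⟩ | ⟨σ, hσ⟩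
    · refine ⟨ι' x, fun y hy => ?_, fun σ hσ => ?_⟩
      · rw [iota_inj hK (hx.symm.trans hy)]
      · exact absurd (hx.symm.trans hσ) (iota_ne_kappa hK)
    · refine ⟨κ' (W.map f hf.quasi σ), fun y hy => ?_, fun τ hτ => ?_⟩
      · exact absurd (hy.symm.trans hσ) (iota_ne_kappa hK)
      · rw [map_inj _ (kappa_inj hK hu hh (hσ.symm.trans hτ))]
  choose f' hi hk using ex
  have ext : ∀ z (hz : h z < n), f' ⟨z, Nat.lt_succ_of_lt hz⟩ = f ⟨z, hz⟩ := by
    intro z hz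
    rcases cas ⟨z, Nat.lt_succ_of_lt hz⟩ with ⟨x, hx⟩ | ⟨σ, hσ⟩
    · rw [hi _ x hx]
      dsimp only at hx
      subst hx
      exact (hf.iota x hz).symm
    · rw [hk _ σ hσ]
      dsimp only at hσ
      subst hσ
      exact (hf.kappa σ hz).symm
  have suppn : ∀ (τ : W.obj (subPO Z (fun z => h z < n))) (z : subPO Z (fun z => h z < n)),
      z ∈ W.supp τ → z.1 ∈ W.supp (W.map sval sval_q τ) := by
    intro τ z hz
    rw [W.supp_natural]
    exact ⟨z, hz, rfl⟩
  have q : ∀ k, ∀ a b : subPO Z (fun z => h z < n + 1), h b.1 = k → f' a ≤ f' b →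
      a.1 ≤ b.1 := by
    intro k
    induction k using Nat.strong_induction_on with
    | _ k ih =>
    intro a b hb hab
    rcases cas b with ⟨y, hy⟩ | ⟨τ, hτ⟩
    · rw [hi b y hy] at hab
      rcases cas a with ⟨x, hx⟩ | ⟨σ, hσ⟩
      · rw [hi a x hx] at hab
        rw [hx, hy]
        exact hI.iota_mono _ _ (hK'.iota_le _ _ hab)
      · rw [hk a σ hσ] at hab
        exact absurd hab (hK'.kappa_iota _ _)
    · have sub : (∃ z ∈ W.supp (W.map f hf.quasi τ), f' a ≤ z) →
          ∃ z ∈ W.supp (W.map sval sval_q τ), a.1 ≤ z := by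
        rintro ⟨z, hz, hle⟩
        rw [W.supp_natural] at hz
        obtain ⟨z0, hz0, rfl⟩ := hz
        have h1 := suppn τ z0 hz0
        have h2 := hh _ _ h1
        rw [← hτ, hb] at h2
        refine ⟨z0.1, h1, ih _ h2 a ⟨z0.1, Nat.lt_succ_of_lt z0.2⟩ rfl ?_⟩
        rw [ext z0.1 z0.2]
        exact hle
      rw [hk b τ hτ] at hab
      rcases cas a with ⟨x, hx⟩ | ⟨σ, hσ⟩
      · rw [hi a x hx] at hab sub
        rw [hx] at sub
        rw [hx, hτ]
        exact (hK.iota_kappa _ _).2 (sub ((hK'.iota_kappa _ _).1 hab))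
      · rw [hk a σ hσ] at hab sub
        rw [hσ] at sub
        rw [hσ, hτ]
        rcases (hK'.kappa_kappa _ _).1 hab with h1 | h1
        · refine (hK.kappa_kappa _ _).2 (Or.inl ?_)
          exact (W.map_emb sval sval_q sval_emb _ _).1 (W.map_quasiEmb f hf.quasi _ _ h1)
        · exact (hK.kappa_kappa _ _).2 (Or.inr (sub h1))
  have qf : QuasiEmb f' := fun a b hab => q _ a b rfl hab
  refine ⟨f', ⟨qf, fun x hx => hi _ x rfl, ?_⟩, ext⟩
  intro σ hσ
  obtain ⟨σ0, hσ0⟩ := lift_sub (p := fun z => h z < n) (W.map sval sval_q σ) (fun s hs => by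
    have h1 := hh _ _ hs
    change h (κ (W.map sval sval_q σ)) < n + 1 at hσ
    omega)
  refine (hk ⟨κ (W.map sval sval_q σ), hσ⟩ σ0 (by rw [hσ0])).trans ?_
  let inc : subPO Z (fun z => h z < n) → subPO Z (fun z => h z < n + 1) :=
    fun z => ⟨z.1, Nat.lt_succ_of_lt z.2⟩
  have hinc : QuasiEmb inc := fun _ _ h => h
  have e : W.map inc hinc σ0 = σ := by
    apply map_inj (sval_q (Z := Z) (p := fun z => h z < n + 1))
    rw [← hσ0]
    exact map_comp' hinc sval_q sval_q (fun _ => rfl) σ0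
  rw [← e, map_comp' hinc qf hf.quasi (fun z => ext z.1 z.2)]

theorem initial_of_condI (hK : IsKruskalFP W X Z ι κ) (hI : KFPCondI W X Z ι κ) :
    IsInitialKFP W X Z ι κ := by
  refine ⟨hK, fun Z' ι' κ' hK' => ?_⟩
  have hu := hI.range_union
  obtain ⟨h, hh⟩ := hI.height
  choose st hst hst' using stage_step hK hI hK' hh
  have h0 : Stage ι κ ι' κ' h 0 (fun z => absurd z.2 (Nat.not_lt_zero _)) :=
    ⟨fun a => absurd a.2 (Nat.not_lt_zero _), fun x hx => absurd hx (Nat.not_lt_zero _),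
      fun x hx => absurd hx (Nat.not_lt_zero _)⟩
  let F : ∀ n, {f : subPO Z (fun z => h z < n) → Z' // Stage ι κ ι' κ' h n f} := fun n =>
    Nat.rec ⟨_, h0⟩ (fun n f => ⟨st n f.1 f.2, hst n f.1 f.2⟩) n
  have coh1 : ∀ n z (hz : h z < n),
      (F (n+1)).1 ⟨z, Nat.lt_succ_of_lt hz⟩ = (F n).1 ⟨z, hz⟩ :=
    fun n z hz => hst' n (F n).1 (F n).2 z hz
  have coh : ∀ m n (hmn : m ≤ n) z (hz : h z < m),
      (F n).1 ⟨z, lt_of_lt_of_le hz hmn⟩ = (F m).1 ⟨z, hz⟩ := by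
    intro m n hmn
    induction n, hmn using Nat.le_induction with
    | base => intro z hz; rfl
    | succ n hmn ih =>
      intro z hz
      rw [← ih z hz]
      exact coh1 n z _
  let f : Z → Z' := fun z => (F (h z + 1)).1 ⟨z, Nat.lt_succ_self _⟩
  have hfF : ∀ n z (hz : h z < n), f z = (F n).1 ⟨z, hz⟩ := fun n z hz =>
    (coh (h z + 1) n hz z (Nat.lt_succ_self _)).symm
  have qf : QuasiEmb f := by
    intro a b hab
    rw [hfF (max (h a) (h b) + 1) a (by omega), hfF (max (h a) (h b) + 1) b (by omega)] at hab
    exact (F _).2.quasi _ _ hab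
  refine ⟨f, ⟨qf, ?_, ?_⟩, ?_⟩
  · funext x
    exact (F _).2.iota x _
  · funext σ
    obtain ⟨σ0, hσ0⟩ := lift_sub (p := fun z => h z < h (κ σ) + 1) σ (fun s hs => by
      have := hh _ _ hs
      omega)
    have e : f (κ (W.map sval sval_q σ0)) = κ' (W.map (F (h (κ σ) + 1)).1 (F _).2.quasi σ0) := by
      rw [hfF (h (κ σ) + 1) _ (by rw [hσ0]; omega)]
      exact (F _).2.kappa σ0 _
    rw [hσ0] at e
    change f (κ σ) = κ' (W.map f qf σ)
    rw [e]
    conv_rhs => rw [← hσ0]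
    rw [map_comp' sval_q qf (F (h (κ σ) + 1)).2.quasi (fun z => hfF _ z.1 z.2)]
  · rintro g ⟨qg, gi, gk⟩
    have main : ∀ k z, h z = k → g z = f z := by
      intro k
      induction k using Nat.strong_induction_on with
      | _ k ih =>
      intro z hz
      have : z ∈ Set.range ι ∪ Set.range κ := hu ▸ Set.mem_univ _
      rcases this with ⟨x, rfl⟩ | ⟨σ, rfl⟩
      · rw [show g (ι x) = ι' x from congrFun gi x]
        exact ((F _).2.iota x _).symm
      · have e1 : g (κ σ) = κ' (W.map g qg σ) := congrFun gk σ
        obtain ⟨σ0, hσ0⟩ := lift_sub (p := fun z => h z < h (κ σ) + 1) σ (fun s hs => by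
          have := hh _ _ hs
          omega)
        have e : f (κ (W.map sval sval_q σ0)) =
            κ' (W.map (F (h (κ σ) + 1)).1 (F _).2.quasi σ0) := by
          rw [hfF (h (κ σ) + 1) _ (by rw [hσ0]; omega)]
          exact (F _).2.kappa σ0 _
        rw [hσ0] at e
        rw [e1, e, map_congr_supp qg qf σ (fun s hs => ih (h s) (hz ▸ hh _ _ hs) s rfl)]
        conv_lhs => rw [← hσ0]
        rw [map_comp' sval_q qf (F (h (κ σ) + 1)).2.quasi (fun z => hfF _ z.1 z.2)]
    funext z
    exact main _ z rfl

end Forward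

section Gen

variable {X Z : POrd.{u}} {ι : X → Z} {κ : W.obj Z → Z}

inductive Gen (ι : X → Z) (κ : W.obj Z → Z) : ℕ → Z → Prop
  | i (n : ℕ) (x : X) : Gen ι κ n (ι x)
  | k (n : ℕ) (σ : W.obj Z) (h : ∀ s ∈ W.supp σ, Gen ι κ n s) : Gen ι κ (n+1) (κ σ)

theorem Gen.succ {n : ℕ} {z : Z} (h : Gen ι κ n z) : Gen ι κ (n+1) z := by
  induction h with
  | i n x => exact .i _ x
  | k n σ _ ih => exact .k _ σ ih

theorem Gen.mono {m n : ℕ} (hmn : m ≤ n) {z : Z} (h : Gen ι κ m z) : Gen ι κ n z := by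
  induction n, hmn using Nat.le_induction with
  | base => exact h
  | succ n _ ih => exact ih.succ

theorem finite_bound {S : Set Z} (hS : S.Finite) {p : ℕ → Z → Prop}
    (hp : ∀ m n, m ≤ n → ∀ z, p m z → p n z) (h : ∀ s ∈ S, ∃ n, p n s) :
    ∃ n, ∀ s ∈ S, p n s := by
  induction S, hS using Set.Finite.induction_on with
  | empty => exact ⟨0, fun s hs => absurd hs (Set.notMem_empty s)⟩
  | @insert a S _ _ ih =>
    obtain ⟨n, hn⟩ := ih (fun s hs => h s (Set.mem_insert_of_mem _ hs))
    obtain ⟨m, hm⟩ := h a (Set.mem_insert _ _)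
    refine ⟨max m n, ?_⟩
    rintro s (rfl | hs)
    · exact hp _ _ (le_max_left _ _) _ hm
    · exact hp _ _ (le_max_right _ _) _ (hn s hs)

theorem all_gen (hInit : IsInitialKFP W X Z ι κ) (z : Z) : ∃ n, Gen ι κ n z := by
  obtain ⟨hK, hI⟩ := hInit
  let p : Z → Prop := fun z => ∃ n, Gen ι κ n z
  have kp : ∀ σ : W.obj (subPO Z p), p (κ (W.map sval sval_q σ)) := by
    intro σ
    obtain ⟨n, hn⟩ := finite_bound (W.supp_finite (W.map sval sval_q σ)) (p := Gen ι κ)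
      (fun m n h z hz => hz.mono h) (by
        intro s hs
        rw [W.supp_natural] at hs
        obtain ⟨s0, _, rfl⟩ := hs
        exact s0.2)
    exact ⟨n+1, .k n _ hn⟩
  let ι' : X → subPO Z p := fun x => ⟨ι x, 0, .i 0 x⟩
  let κ' : W.obj (subPO Z p) → subPO Z p := fun σ => ⟨κ (W.map sval sval_q σ), kp σ⟩
  have suppiff : ∀ (τ : W.obj (subPO Z p)) (a : Z),
      (∃ z ∈ W.supp (W.map sval sval_q τ), a ≤ z) ↔ ∃ z ∈ W.supp τ, a ≤ z.1 := by
    intro τ a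
    rw [W.supp_natural]
    constructor
    · rintro ⟨_, ⟨z, hz, rfl⟩, h⟩
      exact ⟨z, hz, h⟩
    · rintro ⟨z, hz, h⟩
      exact ⟨_, ⟨z, hz, rfl⟩, h⟩
  have hK' : IsKruskalFP W X (subPO Z p) ι' κ' := by
    refine ⟨?_, fun x y h => hK.iota_le x y h, ?_, fun σ y h => hK.kappa_iota _ y h, ?_⟩
    · ext w
      simp only [Set.mem_inter_iff, Set.mem_empty_iff_false, iff_false]
      rintro ⟨⟨x, rfl⟩, σ, hσ⟩
      exact iota_ne_kappa hK (congrArg Subtype.val hσ).symm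
    · intro x τ
      exact (hK.iota_kappa x _).trans (suppiff τ _)
    · intro σ τ
      refine (hK.kappa_kappa _ _).trans (or_congr ?_ (suppiff τ _))
      exact (W.map_emb sval sval_q sval_emb _ _).symm
  obtain ⟨f, ⟨qf, fi, fk⟩, _⟩ := hI _ ι' κ' hK'
  have e : (sval ∘ f : Z → Z) = id := by
    apply (hI Z ι κ hK).unique
    · refine ⟨qf.comp sval_q, ?_, ?_⟩
      · funext x
        exact congrArg sval (congrFun fi x)
      · funext σ
        refine (congrArg sval (congrFun fk σ)).trans ?_
        change κ (W.map sval sval_q (W.map f qf σ)) = _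
        rw [map_comp' qf sval_q (qf.comp sval_q) (fun _ => rfl)]
        rfl
    · refine ⟨quasiEmb_id, rfl, ?_⟩
      rw [W.map_id]; rfl
  have := (f z).2
  rwa [show (f z).1 = z from congrFun e z] at this

theorem range_union_of_gen (h : ∀ z, ∃ n, Gen ι κ n z) :
    Set.range ι ∪ Set.range κ = Set.univ := by
  ext z
  simp only [Set.mem_univ, iff_true]
  obtain ⟨n, hn⟩ := h z
  cases hn with
  | i n x => exact Or.inl ⟨x, rfl⟩
  | k n σ _ => exact Or.inr ⟨σ, rfl⟩

theorem height_of_gen (hW : W.IsNormal) (hK : IsKruskalFP W X Z ι κ)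
    (hg : ∀ z, ∃ n, Gen ι κ n z) :
    ∃ h : Z → ℕ, ∀ (s : Z) (σ : W.obj Z), s ∈ W.supp σ → h s < h (κ σ) := by
  classical
  have hu := range_union_of_gen hg
  refine ⟨fun z => Nat.find (hg z), fun s σ hs => ?_⟩
  have h1 := Nat.find_spec (hg (κ σ))
  have h2 : ∀ n, n < Nat.find (hg (κ σ)) → ¬ Gen ι κ n (κ σ) := fun n hn => Nat.find_min _ hn
  change Nat.find (hg s) < Nat.find (hg (κ σ))
  generalize Nat.find (hg (κ σ)) = m at h1 h2 ⊢
  generalize hz : κ σ = z at h1 h2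
  cases h1 with
  | i n x => exact absurd hz.symm (iota_ne_kappa hK)
  | k n ρ hρ =>
    have no : ∀ s ∈ W.supp ρ, ¬ κ ρ ≤ s := by
      intro s hs hle
      have : s = κ ρ := le_antisymm (le_kappa hK hu hs) hle
      exact h2 n (Nat.lt_succ_self _) (this ▸ hρ s hs)
    have l1 : σ ≤ ρ := by
      rcases (hK.kappa_kappa _ _).1 hz.le with h | ⟨t, ht, hle⟩
      · exact h
      · exact absurd (hz ▸ hle) (no t ht)
    have l2 : ρ ≤ σ := by
      rcases (hK.kappa_kappa _ _).1 hz.ge with h | ⟨t, ht, hle⟩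
      · exact h
      · obtain ⟨t', ht', hle'⟩ := hW _ _ _ l1 t ht
        exact absurd (hle.trans hle') (no t' ht')
    have : σ = ρ := le_antisymm l1 l2
    subst this
    exact Nat.lt_succ_of_le (Nat.find_min' (hg s) (hρ s hs))

end Gen

section Mono

variable {X Z : POrd.{u}} {ι : X → Z} {κ : W.obj Z → Z}

structure Good (R : Z → Z → Prop) : Prop where
  trans : ∀ a b c, R a b → R b c → R a c
  anti : ∀ a b, R a b → R b a → a = b
  left : ∀ a b, R a b → R a a
  right : ∀ a b, R a b → R b b
  le : ∀ a b, R a a → R b b → a ≤ b → R a b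

/-- The field of a good relation, ordered by that relation. -/
def relPO (R : Z → Z → Prop) (hR : Good R) : POrd.{u} :=
  @POrd.mk {z : Z // R z z}
    { le := fun a b => R a.1 b.1
      lt := fun a b => R a.1 b.1 ∧ ¬ R b.1 a.1
      lt_iff_le_not_ge := fun _ _ => Iff.rfl
      le_refl := fun a => a.2
      le_trans := fun a b c => hR.trans _ _ _
      le_antisymm := fun a b h1 h2 => Subtype.ext (hR.anti _ _ h1 h2) }

def rval {R : Z → Z → Prop} {hR : Good R} : relPO R hR → Z := Subtype.val

theorem rval_q {R : Z → Z → Prop} {hR : Good R} : QuasiEmb (rval (R := R) (hR := hR)) :=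
  fun a b h => hR.le _ _ a.2 b.2 h

/-- Lifted order of the dilator. -/
def Lif (W : PODilator.{u}) (R : Z → Z → Prop) (σ τ : W.obj Z) : Prop :=
  ∃ hR : Good R, ∃ σ0 τ0 : W.obj (relPO R hR),
    W.map rval rval_q σ0 = σ ∧ W.map rval rval_q τ0 = τ ∧ σ0 ≤ τ0

inductive Rel (ι : X → Z) (κ : W.obj Z → Z) (B : W.obj Z → W.obj Z → Prop) : Z → Z → Prop
  | ii (x y : X) (h : x ≤ y) : Rel ι κ B (ι x) (ι y)
  | kk (σ τ : W.obj Z) (h : B σ τ) : Rel ι κ B (κ σ) (κ τ)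
  | down (a z : Z) (τ : W.obj Z) (h : Rel ι κ B a z) (hz : z ∈ W.supp τ) (hτ : B τ τ) :
      Rel ι κ B a (κ τ)

/-- Extension relation. -/
structure Ext (R R' : Z → Z → Prop) : Prop where
  sub : ∀ a b, R a b → R' a b
  emb : ∀ a b, R a a → R b b → R' a b → R a b

theorem lif_iff {R : Z → Z → Prop} (hR : Good R) (σ τ : W.obj (relPO R hR)) :
    Lif W R (W.map rval rval_q σ) (W.map rval rval_q τ) ↔ σ ≤ τ := by
  constructor
  · rintro ⟨_, σ0, τ0, h1, h2, h⟩
    rwa [map_inj _ h1, map_inj _ h2] at h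
  · intro h
    exact ⟨hR, σ, τ, rfl, rfl, h⟩

theorem lif_left {R : Z → Z → Prop} {σ τ : W.obj Z} (h : Lif W R σ τ) : Lif W R σ σ := by
  obtain ⟨hR, σ0, τ0, h1, h2, h⟩ := h
  exact ⟨hR, σ0, σ0, h1, h1, le_rfl⟩

theorem lif_right {R : Z → Z → Prop} {σ τ : W.obj Z} (h : Lif W R σ τ) : Lif W R τ τ := by
  obtain ⟨hR, σ0, τ0, h1, h2, h⟩ := h
  exact ⟨hR, τ0, τ0, h2, h2, le_rfl⟩

theorem lif_trans {R : Z → Z → Prop} {σ τ ρ : W.obj Z} (h : Lif W R σ τ) (h' : Lif W R τ ρ) :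
    Lif W R σ ρ := by
  obtain ⟨hR, σ0, τ0, rfl, rfl, h⟩ := h
  obtain ⟨_, τ1, ρ1, h1, h2, h'⟩ := h'
  have := map_inj _ h1
  subst this
  exact ⟨hR, σ0, ρ1, rfl, h2, h.trans h'⟩

theorem lif_anti {R : Z → Z → Prop} {σ τ : W.obj Z} (h : Lif W R σ τ) (h' : Lif W R τ σ) :
    σ = τ := by
  obtain ⟨hR, σ0, τ0, rfl, rfl, h⟩ := h
  rw [lif_iff hR] at h'
  rw [le_antisymm h h']

theorem lif_le {R : Z → Z → Prop} {σ τ : W.obj Z} (h : Lif W R σ σ) (h' : Lif W R τ τ)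
    (hle : σ ≤ τ) : Lif W R σ τ := by
  obtain ⟨hR, σ0, _, rfl, _, _⟩ := h
  obtain ⟨_, τ0, _, rfl, _, _⟩ := h'
  exact (lif_iff hR _ _).2 (W.map_quasiEmb _ _ _ _ hle)

theorem lif_supp {R : Z → Z → Prop} {σ : W.obj Z} (h : Lif W R σ σ) {s : Z}
    (hs : s ∈ W.supp σ) : R s s := by
  obtain ⟨hR, σ0, _, rfl, _, _⟩ := h
  rw [W.supp_natural] at hs
  obtain ⟨s0, _, rfl⟩ := hs
  exact s0.2

theorem lif_normal (hW : W.IsNormal) {R : Z → Z → Prop} {σ τ : W.obj Z} (h : Lif W R σ τ)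
    {s : Z} (hs : s ∈ W.supp σ) : ∃ t ∈ W.supp τ, R s t := by
  obtain ⟨hR, σ0, τ0, rfl, rfl, h⟩ := h
  rw [W.supp_natural] at hs
  obtain ⟨s0, hs0, rfl⟩ := hs
  obtain ⟨t0, ht0, hle⟩ := hW _ _ _ h s0 hs0
  refine ⟨rval t0, ?_, hle⟩
  rw [W.supp_natural]
  exact ⟨t0, ht0, rfl⟩

def rinc {R R' : Z → Z → Prop} {hR : Good R} {hR' : Good R'} (h : Ext R R') :
    relPO R hR → relPO R' hR' := fun z => ⟨z.1, h.sub _ _ z.2⟩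

theorem rinc_emb {R R' : Z → Z → Prop} {hR : Good R} {hR' : Good R'} (h : Ext R R') :
    IsEmb (rinc h : relPO R hR → relPO R' hR') :=
  fun a b => ⟨fun hab => h.sub _ _ hab, fun hab => h.emb _ _ a.2 b.2 hab⟩

theorem rinc_q {R R' : Z → Z → Prop} {hR : Good R} {hR' : Good R'} (h : Ext R R') :
    QuasiEmb (rinc h : relPO R hR → relPO R' hR') := fun a b hab => (rinc_emb h a b).2 hab

theorem rval_rinc {R R' : Z → Z → Prop} {hR : Good R} {hR' : Good R'} (h : Ext R R')
    (σ : W.obj (relPO R hR)) :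
    W.map (rval (hR := hR')) rval_q (W.map (rinc h) (rinc_q h) σ) =
      W.map (rval (hR := hR)) rval_q σ :=
  map_comp' _ _ _ (fun _ => rfl) σ

theorem lif_ext {R R' : Z → Z → Prop} (hR' : Good R') (h : Ext R R') {σ τ : W.obj Z}
    (hl : Lif W R σ τ) : Lif W R' σ τ := by
  obtain ⟨hR, σ0, τ0, rfl, rfl, hle⟩ := hl
  refine ⟨hR', W.map (rinc h) (rinc_q h) σ0, W.map (rinc h) (rinc_q h) τ0, ?_, ?_, ?_⟩
  · exact map_comp' _ _ _ (fun _ => rfl) _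
  · exact map_comp' _ _ _ (fun _ => rfl) _
  · exact (W.map_emb _ _ (rinc_emb h) _ _).1 hle

theorem lif_ext_emb {R R' : Z → Z → Prop} (hR' : Good R') (h : Ext R R') {σ τ : W.obj Z}
    (hσ : Lif W R σ σ) (hτ : Lif W R τ τ) (hl : Lif W R' σ τ) : Lif W R σ τ := by
  obtain ⟨hR, σ0, _, rfl, _, _⟩ := hσ
  obtain ⟨_, τ0, _, rfl, _, _⟩ := hτ
  rw [lif_iff hR]
  apply W.map_quasiEmb (rinc h) (rinc_q h : QuasiEmb (rinc h : relPO R hR → relPO R' hR'))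
  rw [← lif_iff hR', rval_rinc, rval_rinc]
  exact hl

theorem lif_down {R R' : Z → Z → Prop} (hR : Good R) (hR' : Good R') (h : Ext R R')
    {σ : W.obj Z} (hl : Lif W R' σ σ) (hs : ∀ s ∈ W.supp σ, R s s) : Lif W R σ σ := by
  obtain ⟨_, σ0, _, rfl, _, _⟩ := hl
  obtain ⟨σ1, rfl⟩ := W.supp_cond (rinc h : relPO R hR → relPO R' hR') (rinc_q h) (rinc_emb h) σ0
    (by
      intro s hs0
      have : R s.1 s.1 := hs _ (by rw [W.supp_natural]; exact ⟨s, hs0, rfl⟩)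
      exact ⟨⟨s.1, this⟩, rfl⟩)
  rw [rval_rinc, lif_iff hR]

/-- Standing facts used for inversion. -/
structure Sep (ι : X → Z) (κ : W.obj Z → Z) (h : Z → ℕ) : Prop where
  kfp : IsKruskalFP W X Z ι κ
  kinj : ∀ σ τ, κ σ = κ τ → σ = τ
  height : ∀ (s : Z) (σ : W.obj Z), s ∈ W.supp σ → h s < h (κ σ)

section Step
variable {h : Z → ℕ} (S : Sep ι κ h) {B : W.obj Z → W.obj Z → Prop}
include S

theorem rel_ii {x y : X} (hr : Rel ι κ B (ι x) (ι y)) : x ≤ y := by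
  generalize ha : ι x = a at hr
  generalize hb : ι y = b at hr
  cases hr with
  | ii x' y' hxy => rwa [iota_inj S.kfp ha, iota_inj S.kfp hb]
  | kk σ τ _ => exact absurd ha (iota_ne_kappa S.kfp)
  | down => exact absurd hb (iota_ne_kappa S.kfp)

theorem rel_ki {σ : W.obj Z} {y : X} (hr : Rel ι κ B (κ σ) (ι y)) : False := by
  generalize ha : κ σ = a at hr
  generalize hb : ι y = b at hr
  cases hr with
  | ii x' y' hxy => exact iota_ne_kappa S.kfp ha.symm
  | kk σ τ _ => exact iota_ne_kappa S.kfp hb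
  | down => exact iota_ne_kappa S.kfp hb

theorem rel_ik {x : X} {τ : W.obj Z} (hr : Rel ι κ B (ι x) (κ τ)) :
    B τ τ ∧ ∃ z ∈ W.supp τ, Rel ι κ B (ι x) z := by
  generalize ha : ι x = a at hr
  generalize hb : κ τ = b at hr
  cases hr with
  | ii x' y' hxy => exact absurd hb.symm (iota_ne_kappa S.kfp)
  | kk σ τ _ => exact absurd ha (iota_ne_kappa S.kfp)
  | down a z τ' hr hz hτ => rw [S.kinj _ _ hb]; exact ⟨hτ, z, hz, hr⟩

theorem rel_kk {σ τ : W.obj Z} (hr : Rel ι κ B (κ σ) (κ τ)) :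
    B σ τ ∨ (B τ τ ∧ ∃ z ∈ W.supp τ, Rel ι κ B (κ σ) z) := by
  generalize ha : κ σ = a at hr
  generalize hb : κ τ = b at hr
  cases hr with
  | ii x' y' hxy => exact absurd hb.symm (iota_ne_kappa S.kfp)
  | kk σ τ hB => rw [S.kinj _ _ ha, S.kinj _ _ hb]; exact Or.inl hB
  | down a z τ' hr hz hτ => rw [S.kinj _ _ hb]; exact Or.inr ⟨hτ, z, hz, hr⟩

theorem good_step (hW : W.IsNormal) {R : Z → Z → Prop}
    (hE : ∀ a b, R a b → Rel ι κ (Lif W R) a b) : Good (Rel ι κ (Lif W R)) := by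
  have left : ∀ a b, Rel ι κ (Lif W R) a b → Rel ι κ (Lif W R) a a := by
    intro a b hr
    induction hr with
    | ii x y _ => exact .ii x x le_rfl
    | kk σ τ hB => exact .kk _ _ (lif_left hB)
    | down a z τ _ _ _ ih => exact ih
  have right : ∀ a b, Rel ι κ (Lif W R) a b → Rel ι κ (Lif W R) b b := by
    intro a b hr
    cases hr with
    | ii x y _ => exact .ii y y le_rfl
    | kk σ τ hB => exact .kk _ _ (lif_right hB)
    | down a z τ _ _ hτ => exact .kk _ _ hτ
  have trans : ∀ k, ∀ c, h c = k → ∀ a b, Rel ι κ (Lif W R) a b → Rel ι κ (Lif W R) b c →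
      Rel ι κ (Lif W R) a c := by
    intro k
    induction k using Nat.strong_induction_on with
    | _ k ih =>
    intro c hc a b hab hbc
    cases hbc with
    | ii x y hxy =>
      generalize hb : ι x = b at hab
      cases hab with
      | ii x' y' hxy' =>
        have := iota_inj S.kfp hb
        subst this
        exact .ii _ _ (hxy'.trans hxy)
      | kk => exact absurd hb (iota_ne_kappa S.kfp)
      | down => exact absurd hb (iota_ne_kappa S.kfp)
    | kk σ τ hB =>
      generalize hb : κ σ = b at hab
      cases hab with
      | ii => exact absurd hb.symm (iota_ne_kappa S.kfp)
      | kk ρ σ' hB' =>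
        have := S.kinj _ _ hb
        subst this
        exact .kk _ _ (lif_trans hB' hB)
      | down a z σ' haz hz hσ =>
        have := S.kinj _ _ hb
        subst this
        obtain ⟨t, ht, hzt⟩ := lif_normal hW hB hz
        exact .down _ t _ (ih (h t) (hc ▸ S.height _ _ ht) t rfl _ _ haz (hE _ _ hzt)) ht
          (lif_right hB)
    | down b z τ hbz hz hτ =>
      exact .down _ z _ (ih (h z) (hc ▸ S.height _ _ hz) z rfl _ _ hab hbz) hz hτ
  have tr : ∀ a b c, Rel ι κ (Lif W R) a b → Rel ι κ (Lif W R) b c →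
      Rel ι κ (Lif W R) a c := fun a b c => trans _ c rfl a b
  have irr : ∀ k, ∀ τ, h (κ τ) = k → ∀ z ∈ W.supp τ, ¬ Rel ι κ (Lif W R) (κ τ) z := by
    intro k
    induction k using Nat.strong_induction_on with
    | _ k ih =>
    intro τ hk z hz hr
    have hττ := left _ _ hr
    have hzz := right _ _ hr
    have hB : Lif W R τ τ := by
      rcases rel_kk S hττ with h1 | ⟨h1, _⟩ <;> exact h1
    have hzt := Rel.down z z τ hzz hz hB
    have hlt := S.height _ _ hz
    generalize ha : κ τ = a at hr
    cases hr with
    | ii => exact iota_ne_kappa S.kfp ha.symm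
    | kk τ' ρ hB' =>
      have := S.kinj _ _ ha
      subst this
      obtain ⟨w, hw, hzw⟩ := lif_normal hW hB' hz
      exact ih _ (hk ▸ hlt) ρ rfl w hw (hE _ _ hzw)
    | down a w ρ haw hw hρ =>
      subst ha
      exact ih _ (hk ▸ hlt) ρ rfl w hw (tr _ _ _ hzt haw)
  refine ⟨tr, ?_, left, right, ?_⟩
  · intro a b hab hba
    cases hab with
    | ii x y hxy => rw [le_antisymm hxy (rel_ii S hba)]
    | kk σ τ hB =>
      rcases rel_kk S hba with h1 | ⟨_, z, hz, h1⟩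
      · rw [lif_anti hB h1]
      · exact absurd (tr _ _ _ (.kk _ _ hB) h1) (irr _ _ rfl z hz)
    | down a z τ haz hz hτ => exact absurd (tr _ _ _ hba haz) (irr _ _ rfl z hz)
  · have le : ∀ k, ∀ b, h b = k → ∀ a, Rel ι κ (Lif W R) a a → Rel ι κ (Lif W R) b b → a ≤ b →
        Rel ι κ (Lif W R) a b := by
      intro k
      induction k using Nat.strong_induction_on with
      | _ k ih =>
      intro b hk a ha hb hab
      have cas : ∀ a, Rel ι κ (Lif W R) a a →
          (∃ x, a = ι x) ∨ ∃ σ, a = κ σ ∧ Lif W R σ σ := by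
        intro a ha
        have gen : ∀ c d, Rel ι κ (Lif W R) c d →
            (∃ x, d = ι x) ∨ ∃ σ, d = κ σ ∧ Lif W R σ σ := by
          intro c d hcd
          cases hcd with
          | ii x y _ => exact Or.inl ⟨_, rfl⟩
          | kk σ τ h1 => exact Or.inr ⟨_, rfl, lif_right h1⟩
          | down _ _ τ _ _ h1 => exact Or.inr ⟨_, rfl, h1⟩
        exact gen _ _ ha
      rcases cas b hb with ⟨y, rfl⟩ | ⟨τ, rfl, hτ⟩
      · rcases cas a ha with ⟨x, rfl⟩ | ⟨σ, rfl, hσ⟩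
        · exact .ii _ _ (S.kfp.iota_le _ _ hab)
        · exact absurd hab (S.kfp.kappa_iota _ _)
      · have sub : (∃ z ∈ W.supp τ, a ≤ z) → Rel ι κ (Lif W R) a (κ τ) := by
          rintro ⟨z, hz, hle⟩
          exact .down _ z _ (ih _ (hk ▸ S.height _ _ hz) z rfl a ha
            (hE _ _ (lif_supp hτ hz)) hle) hz hτ
        rcases cas a ha with ⟨x, rfl⟩ | ⟨σ, rfl, hσ⟩
        · exact sub ((S.kfp.iota_kappa _ _).1 hab)
        · rcases (S.kfp.kappa_kappa _ _).1 hab with h1 | h1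
          · exact .kk _ _ (lif_le hσ hτ h1)
          · exact sub h1
    exact fun a b ha hb hab => le _ b rfl a ha hb hab

theorem ext_step {R R' : Z → Z → Prop} (hR' : Good R') (hE : Ext R R')
    (hsub : ∀ a b, R a b → Rel ι κ (Lif W R) a b) :
    Ext (Rel ι κ (Lif W R)) (Rel ι κ (Lif W R')) := by
  have fld : ∀ σ, Rel ι κ (Lif W R) (κ σ) (κ σ) → Lif W R σ σ := by
    intro σ h1
    rcases rel_kk S h1 with h1 | ⟨h1, _⟩ <;> exact h1
  constructor
  · intro a b hr
    induction hr with
    | ii x y h1 => exact .ii _ _ h1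
    | kk σ τ h1 => exact .kk _ _ (lif_ext hR' hE h1)
    | down a z τ _ hz h1 ih => exact .down _ z _ ih hz (lif_ext hR' hE h1)
  · intro a b ha hb hr
    induction hr with
    | ii x y h1 => exact .ii _ _ h1
    | kk σ τ h1 => exact .kk _ _ (lif_ext_emb hR' hE (fld _ ha) (fld _ hb) h1)
    | down a z τ _ hz h1 ih =>
      have := fld _ hb
      exact .down _ z _ (ih ha (hsub _ _ (lif_supp this hz))) hz this

end Step

def Rn (ι : X → Z) (κ : W.obj Z → Z) : ℕ → Z → Z → Prop
  | 0 => fun _ _ => False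
  | n+1 => Rel ι κ (Lif W (Rn ι κ n))

theorem exists_fixed (hW : W.IsNormal) {h : Z → ℕ} (S : Sep ι κ h) :
    ∃ R : Z → Z → Prop, Good R ∧ (∀ a b, R a b ↔ Rel ι κ (Lif W R) a b) ∧
      ∀ σ, (∀ s ∈ W.supp σ, R s s) → Lif W R σ σ → R (κ σ) (κ σ) := by
  have inv : ∀ n, Good (Rn ι κ n) ∧ Ext (Rn ι κ n) (Rn ι κ (n+1)) := by
    intro n
    induction n with
    | zero =>
      constructor
      · constructor <;> intros <;> first | assumption | contradiction
      · exact ⟨fun _ _ h => h.elim, fun _ _ h => h.elim⟩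
    | succ n ih =>
      have g : Good (Rn ι κ (n+1)) := good_step S hW ih.2.sub
      exact ⟨g, ext_step S g ih.2 ih.2.sub⟩
  have mono : ∀ m n, m ≤ n → Ext (Rn ι κ m) (Rn ι κ n) := by
    intro m n hmn
    induction n, hmn using Nat.le_induction with
    | base => exact ⟨fun _ _ h => h, fun _ _ _ _ h => h⟩
    | succ n _ ih =>
      exact ⟨fun a b h => (inv n).2.sub _ _ (ih.sub _ _ h), fun a b ha hb h =>
        ih.emb _ _ ha hb ((inv n).2.emb _ _ (ih.sub _ _ ha) (ih.sub _ _ hb) h)⟩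
  let R : Z → Z → Prop := fun a b => ∃ n, Rn ι κ n a b
  have hext : ∀ n, Ext (Rn ι κ n) R := by
    intro n
    refine ⟨fun a b h => ⟨n, h⟩, ?_⟩
    rintro a b ha hb ⟨m, hm⟩
    exact (mono n (max m n) (le_max_right _ _)).emb _ _ ha hb
      ((mono m (max m n) (le_max_left _ _)).sub _ _ hm)
  have hR : Good R := by
    refine ⟨?_, ?_, ?_, ?_, ?_⟩
    · rintro a b c ⟨m, hm⟩ ⟨n, hn⟩
      exact ⟨max m n, (inv _).1.trans a b c ((mono m _ (le_max_left _ _)).sub _ _ hm)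
        ((mono n _ (le_max_right _ _)).sub _ _ hn)⟩
    · rintro a b ⟨m, hm⟩ ⟨n, hn⟩
      exact (inv (max m n)).1.anti a b ((mono m _ (le_max_left _ _)).sub _ _ hm)
        ((mono n _ (le_max_right _ _)).sub _ _ hn)
    · rintro a b ⟨m, hm⟩
      exact ⟨m, (inv m).1.left _ _ hm⟩
    · rintro a b ⟨m, hm⟩
      exact ⟨m, (inv m).1.right _ _ hm⟩
    · rintro a b ⟨m, hm⟩ ⟨n, hn⟩ hab
      exact ⟨max m n, (inv (max m n)).1.le a b ((mono m _ (le_max_left _ _)).sub _ _ hm)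
        ((mono n _ (le_max_right _ _)).sub _ _ hn) hab⟩
  have lifn : ∀ τ, Lif W R τ τ → ∃ n, Lif W (Rn ι κ n) τ τ := by
    intro τ hτ
    obtain ⟨n, hn⟩ := finite_bound (W.supp_finite τ) (p := fun n s => Rn ι κ n s s)
      (fun m n hmn z hz => (mono m n hmn).sub _ _ hz) (fun s hs => lif_supp hτ hs)
    exact ⟨n, lif_down (inv n).1 hR (hext n) hτ hn⟩
  have fix : ∀ a b, R a b ↔ Rel ι κ (Lif W R) a b := by
    intro a b
    constructor
    · rintro ⟨n, hn⟩
      have := (inv n).2.sub _ _ hn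
      exact (ext_step S hR (hext n) (inv n).2.sub).sub _ _ this
    · intro hr
      induction hr with
      | ii x y h1 => exact ⟨1, .ii _ _ h1⟩
      | kk σ τ h1 =>
        obtain ⟨m, hm⟩ := lifn _ (lif_left h1)
        obtain ⟨n, hn⟩ := lifn _ (lif_right h1)
        have e1 := lif_ext (inv _).1 (mono m (max m n) (le_max_left _ _)) hm
        have e2 := lif_ext (inv _).1 (mono n (max m n) (le_max_right _ _)) hn
        exact ⟨max m n + 1, .kk _ _ (lif_ext_emb hR (hext _) e1 e2 h1)⟩
      | down a z τ _ hz h1 ih =>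
        obtain ⟨m, hm⟩ := ih
        obtain ⟨n, hn⟩ := lifn _ h1
        have e2 := lif_ext (inv _).1 (mono n (max m n) (le_max_right _ _)) hn
        exact ⟨max m n + 1, .down _ z _ ((mono m (max m n + 1) (by omega)).sub _ _ hm) hz e2⟩
  exact ⟨R, hR, fix, fun σ _ hl => (fix _ _).2 (.kk _ _ hl)⟩

theorem iota_mono_of_initial (hW : W.IsNormal) {h : Z → ℕ} (S : Sep ι κ h)
    (hInit : IsInitialKFP W X Z ι κ) (x y : X) (hxy : x ≤ y) : ι x ≤ ι y := by
  obtain ⟨R, hR, fix, -⟩ := exists_fixed hW S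
  let ι' : X → relPO R hR := fun x => ⟨ι x, (fix _ _).2 (.ii _ _ le_rfl)⟩
  let κ' : W.obj (relPO R hR) → relPO R hR := fun σ =>
    ⟨κ (W.map rval rval_q σ), (fix _ _).2 (.kk _ _ ((lif_iff hR _ _).2 le_rfl))⟩
  have suppiff : ∀ (τ : W.obj (relPO R hR)) (a : Z),
      (∃ z ∈ W.supp (W.map rval rval_q τ), Rel ι κ (Lif W R) a z) ↔
        ∃ z ∈ W.supp τ, R a z.1 := by
    intro τ a
    rw [W.supp_natural]
    constructor
    · rintro ⟨_, ⟨z, hz, rfl⟩, h⟩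
      exact ⟨z, hz, (fix _ _).2 h⟩
    · rintro ⟨z, hz, h⟩
      exact ⟨_, ⟨z, hz, rfl⟩, (fix _ _).1 h⟩
  have hself : ∀ τ : W.obj (relPO R hR),
      Lif W R (W.map rval rval_q τ) (W.map rval rval_q τ) := fun τ => (lif_iff hR _ _).2 le_rfl
  have hK' : IsKruskalFP W X (relPO R hR) ι' κ' := by
    refine ⟨?_, fun x y h => rel_ii S ((fix _ _).1 h), ?_,
      fun σ y h => rel_ki S ((fix _ _).1 h), ?_⟩
    · ext w
      simp only [Set.mem_inter_iff, Set.mem_empty_iff_false, iff_false]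
      rintro ⟨⟨x, rfl⟩, σ, hσ⟩
      exact iota_ne_kappa S.kfp (congrArg Subtype.val hσ).symm
    · intro x τ
      refine Iff.trans ?_ (suppiff τ (ι x))
      refine (fix _ _).trans ⟨fun h => (rel_ik S h).2, ?_⟩
      rintro ⟨z, hz, h⟩
      exact .down _ z _ h hz (hself τ)
    · intro σ τ
      refine Iff.trans ?_ (or_congr (lif_iff hR σ τ) (suppiff τ (κ (W.map rval rval_q σ))))
      refine (fix _ _).trans ⟨fun h => (rel_kk S h).imp id And.right, ?_⟩
      rintro (h | ⟨z, hz, h⟩)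
      · exact .kk _ _ h
      · exact .down _ z _ h hz (hself τ)
  obtain ⟨f, ⟨qf, fi, -⟩, -⟩ := hInit.2 _ ι' κ' hK'
  apply qf
  rw [show f (ι x) = ι' x from congrFun fi x, show f (ι y) = ι' y from congrFun fi y]
  exact (fix _ _).2 (.ii _ _ hxy)

end Mono

end KFPaux

/-- A Kruskal fixed point satisfies condition (i) iff it is initial. -/
theorem kruskalFP_condI_iff_initial (W : PODilator.{u}) (hW : W.IsNormal)
    (X Z : POrd.{u}) (ι : X → Z) (κ : W.obj Z → Z)
    (hK : IsKruskalFP W X Z ι κ) :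
    KFPCondI W X Z ι κ ↔ IsInitialKFP W X Z ι κ := by
  constructor
  · exact KFPaux.initial_of_condI hK
  · intro hI
    have hg := KFPaux.all_gen hI
    have hu := KFPaux.range_union_of_gen hg
    obtain ⟨h, hh⟩ := KFPaux.height_of_gen hW hK hg
    exact ⟨hu, KFPaux.iota_mono_of_initial hW
      ⟨hK, fun _ _ e => KFPaux.kappa_inj hK hu hh e, hh⟩ hI, h, hh⟩
end

section
/- For every normal PO-dilator W and every partial order X there exists an initial Kruskal fixed point of W over X. -/
universe u

namespace KFP

section stages

variable {W : PODilator.{u}} {X : POrd.{u}}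

theorem map_congr (W : PODilator.{u}) {A B : POrd.{u}} {f g : A → B} (h : f = g)
    (hf : QuasiEmb f) (hg : QuasiEmb g) (σ : W.obj A) : W.map f hf σ = W.map g hg σ := by
  subst h; rfl

theorem map_map (W : PODilator.{u}) {A B C : POrd.{u}} (f : A → B) (g : B → C)
    (hf : QuasiEmb f) (hg : QuasiEmb g) (k : A → C) (hk : QuasiEmb k) (h : ∀ a, g (f a) = k a)
    (σ : W.obj A) : W.map g hg (W.map f hf σ) = W.map k hk σ := by
  have h1 : g ∘ f = k := funext h
  subst h1
  exact (congrFun (W.map_comp f g hf hg) σ).symm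

theorem isEmb_quasi {A B : Type*} [PartialOrder A] [PartialOrder B] {f : A → B}
    (h : IsEmb f) : QuasiEmb f := fun x y => (h x y).2

theorem quasi_inj {A B : Type*} [PartialOrder A] [PartialOrder B] {f : A → B}
    (h : QuasiEmb f) {x y : A} (e : f x = f y) : x = y :=
  le_antisymm (h _ _ e.le) (h _ _ e.ge)

/-- Base comparison. -/
def B (W : PODilator.{u}) (X Z : POrd.{u}) : X ⊕ W.obj Z → X ⊕ W.obj Z → Prop
  | .inl x, .inl y => x ≤ y
  | .inr σ, .inr τ => σ ≤ τ
  | _, _ => False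

/-- Support of a sum element. -/
def S (W : PODilator.{u}) (X Z : POrd.{u}) : X ⊕ W.obj Z → Set Z
  | .inl _ => ∅
  | .inr τ => W.supp τ

theorem B_refl {Z : POrd.{u}} (s : X ⊕ W.obj Z) : B W X Z s s := by
  cases s <;> simp [B]

theorem B_trans {Z : POrd.{u}} {s t r : X ⊕ W.obj Z} (h : B W X Z s t) (h' : B W X Z t r) :
    B W X Z s r := by
  rcases s with s | s <;> rcases t with t | t <;> rcases r with r | r <;> simp only [B] at * <;>
    exact h.trans h'

theorem B_antisymm {Z : POrd.{u}} {s t : X ⊕ W.obj Z} (h : B W X Z s t) (h' : B W X Z t s) :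
    s = t := by
  rcases s with s | s <;> rcases t with t | t <;> simp only [B] at * <;>
    exact congrArg _ (le_antisymm h h')

theorem B_supp (hW : W.IsNormal) {Z : POrd.{u}} {s t : X ⊕ W.obj Z} (h : B W X Z s t) :
    ∀ v ∈ S W X Z s, ∃ v' ∈ S W X Z t, v ≤ v' := by
  rcases s with s | s <;> rcases t with t | t
  · simp [S]
  · simp [S]
  · exact h.elim
  · exact hW _ _ _ h

inductive R {W : PODilator.{u}} {X Z : POrd.{u}} (d : Z → X ⊕ W.obj Z) (s : X ⊕ W.obj Z) :
    Z → Prop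
  | base {w : Z} : B W X Z s (d w) → R d s w
  | step {w v : Z} : v ∈ S W X Z (d w) → R d s v → R d s w

/-- A stage of the construction. -/
structure Stage (W : PODilator.{u}) (X : POrd.{u}) : Type (u + 1) where
  Z : POrd.{u}
  d : Z → X ⊕ W.obj Z
  le_iff : ∀ z w : Z, z ≤ w ↔ R d (d z) w
  acc : ∀ w : Z, Acc (fun v w => v ∈ S W X Z (d w)) w

/-- The order on the next stage. -/
def N {Z : POrd.{u}} (d : Z → X ⊕ W.obj Z) (s t : X ⊕ W.obj Z) : Prop :=
  B W X Z s t ∨ ∃ v ∈ S W X Z t, R d s v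

theorem R_iff {Z : POrd.{u}} (d : Z → X ⊕ W.obj Z) (s : X ⊕ W.obj Z) (w : Z) :
    R d s w ↔ N d s (d w) := by
  constructor
  · rintro (h | ⟨h, h'⟩)
    · exact Or.inl h
    · exact Or.inr ⟨_, h, h'⟩
  · rintro (h | ⟨v, h, h'⟩)
    · exact .base h
    · exact .step h h'

theorem R_aux (hW : W.IsNormal) {Z : POrd.{u}} {d : Z → X ⊕ W.obj Z} {s t : X ⊕ W.obj Z}
    (H : ∀ v ∈ S W X Z t, R d s v → ∀ v', v ≤ v' → R d s v')
    (h : N d s t) {w : Z} (hw : R d t w) : R d s w := by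
  induction hw with
  | base hb =>
    rcases h with h | ⟨v, hv, h⟩
    · exact .base (B_trans h hb)
    · obtain ⟨v', hv', hle⟩ := B_supp hW hb v hv
      exact .step hv' (H v hv h v' hle)
  | step hv _ ih => exact .step hv ih

theorem R_mono (hW : W.IsNormal) (T : Stage W X) {s : X ⊕ W.obj T.Z} {w : T.Z}
    (h : R T.d s w) : ∀ w', w ≤ w' → R T.d s w' := by
  induction T.acc w with
  | intro w _ ih =>
    intro w' hle
    exact R_aux hW (fun v hv hR v' hl => ih v hv hR v' hl) ((R_iff _ _ _).1 h)
      ((T.le_iff _ _).1 hle)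

theorem N_trans (hW : W.IsNormal) (T : Stage W X) {s t r : X ⊕ W.obj T.Z}
    (h : N T.d s t) (h' : N T.d t r) : N T.d s r := by
  rcases h' with h' | ⟨v, hv, h'⟩
  · rcases h with h | ⟨v, hv, h⟩
    · exact .inl (B_trans h h')
    · obtain ⟨v', hv', hle⟩ := B_supp hW h' v hv
      exact .inr ⟨v', hv', R_mono hW T h _ hle⟩
  · exact .inr ⟨v, hv, R_aux hW (fun v _ hR v' hl => R_mono hW T hR v' hl) h h'⟩

theorem Stage.sub_le (T : Stage W X) {v w : T.Z} (h : v ∈ S W X T.Z (T.d w)) : v ≤ w :=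
  (T.le_iff _ _).2 (.step h (.base (B_refl _)))

theorem Stage.irr (T : Stage W X) {w : T.Z} (h : w ∈ S W X T.Z (T.d w)) : False := by
  have := T.acc w
  induction this with
  | intro w _ ih => exact ih w h h

theorem N_irr (hW : W.IsNormal) (T : Stage W X) {t : X ⊕ W.obj T.Z} {v w : T.Z}
    (h : R T.d t w) (hv : v ∈ S W X T.Z t) (hle : w ≤ v) : False := by
  induction h with
  | @base w hb =>
    obtain ⟨v', hv', hl⟩ := B_supp hW hb v hv
    have h1 := T.sub_le hv'
    have e1 : w = v := le_antisymm hle (hl.trans h1)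
    have e2 : v' = w := le_antisymm h1 (hle.trans hl)
    subst e2
    exact T.irr hv'
  | step h1 _ ih => exact ih ((T.sub_le h1).trans hle)

/-- The next partial order. -/
def nextOrd (hW : W.IsNormal) (T : Stage W X) : POrd.{u} :=
  @POrd.mk (X ⊕ W.obj T.Z)
    { le := N T.d
      lt := fun s t => N T.d s t ∧ ¬ N T.d t s
      lt_iff_le_not_ge := fun _ _ => Iff.rfl
      le_refl := fun s => Or.inl (B_refl s)
      le_trans := fun _ _ _ h h' => N_trans hW T h h'
      le_antisymm := by
        intro s t h h'
        have h0 := h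
        have h0' := h'
        rcases h with h | ⟨v, hv, h⟩
        · rcases h' with h' | ⟨v, hv, h'⟩
          · exact B_antisymm h h'
          · exact (N_irr hW T (R_aux hW (fun v _ hR v' hl => R_mono hW T hR v' hl) h0 h')
              hv le_rfl).elim
        · exact (N_irr hW T (R_aux hW (fun v _ hR v' hl => R_mono hW T hR v' hl) h0' h)
              hv le_rfl).elim }

theorem next_le (hW : W.IsNormal) (T : Stage W X) (s t : nextOrd hW T) :
    s ≤ t ↔ N T.d s t := Iff.rfl

/-- The transition map. -/
def up (hW : W.IsNormal) (T : Stage W X) (z : T.Z) : nextOrd hW T := T.d z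

theorem up_emb (hW : W.IsNormal) (T : Stage W X) : IsEmb (up hW T) := by
  intro z w
  rw [next_le, T.le_iff, R_iff]
  rfl

def nextD (hW : W.IsNormal) (T : Stage W X) : nextOrd hW T → X ⊕ W.obj (nextOrd hW T)
  | .inl x => .inl x
  | .inr σ => .inr (W.map (up hW T) (isEmb_quasi (up_emb hW T)) σ)

theorem nextD_S (hW : W.IsNormal) (T : Stage W X) (t : nextOrd hW T) :
    S W X (nextOrd hW T) (nextD hW T t) = Set.image (up hW T) (S W X T.Z t) := by
  rcases t with t | t
  · simp [S, nextD]
  · simp only [S, nextD]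
    exact W.supp_natural _ _ _

theorem nextD_B (hW : W.IsNormal) (T : Stage W X) (s t : nextOrd hW T) :
    B W X (nextOrd hW T) (nextD hW T s) (nextD hW T t) ↔ B W X T.Z s t := by
  rcases s with s | s <;> rcases t with t | t <;> simp only [B, nextD]
  exact (W.map_emb _ _ (up_emb hW T) _ _).symm

theorem nextD_R (hW : W.IsNormal) (T : Stage W X) (s : nextOrd hW T) (w : T.Z) :
    R (nextD hW T) (nextD hW T s) (up hW T w) ↔ R T.d s w := by
  constructor
  · generalize hu : up hW T w = u
    intro h
    induction h generalizing w with
    | base hb =>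
      subst hu
      exact .base ((nextD_B hW T _ _).1 hb)
    | step hv _ ih =>
      subst hu
      rw [nextD_S] at hv
      obtain ⟨v, hv, rfl⟩ := hv
      exact .step hv (ih v rfl)
  · intro h
    induction h with
    | base hb => exact .base ((nextD_B hW T _ _).2 hb)
    | @step w v hv _ ih =>
      refine .step ?_ ih
      rw [nextD_S]
      exact ⟨v, hv, rfl⟩

def next (hW : W.IsNormal) (T : Stage W X) : Stage W X where
  Z := nextOrd hW T
  d := nextD hW T
  le_iff := by
    intro s t
    rw [next_le, R_iff]
    unfold N
    rw [nextD_B, nextD_S]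
    simp only [Set.exists_mem_image, nextD_R]
  acc := by
    have key : ∀ w : T.Z, Acc (fun v w => v ∈ S W X (nextOrd hW T) (nextD hW T w))
        (up hW T w) := by
      intro w
      induction T.acc w with
      | intro w _ ih =>
        constructor
        intro y hy
        rw [nextD_S] at hy
        obtain ⟨v, hv, rfl⟩ := hy
        exact ih v hv
    intro w
    constructor
    intro y hy
    rw [nextD_S] at hy
    obtain ⟨v, hv, rfl⟩ := hy
    exact key v

def zero (W : PODilator.{u}) (X : POrd.{u}) : Stage W X where
  Z := @POrd.mk PEmpty
    { le := fun _ _ => True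
      lt := fun _ _ => False
      lt_iff_le_not_ge := fun a => a.elim
      le_refl := fun _ => trivial
      le_trans := fun _ _ _ _ _ => trivial
      le_antisymm := fun a => a.elim }
  d := fun a => PEmpty.elim a
  le_iff := fun a => PEmpty.elim a
  acc := fun a => PEmpty.elim a

def stage (hW : W.IsNormal) (X : POrd.{u}) : ℕ → Stage W X
  | 0 => zero W X
  | n + 1 => next hW (stage hW X n)

/-- The carrier of stage `n`. -/
def Zn (hW : W.IsNormal) (X : POrd.{u}) (n : ℕ) : POrd.{u} := (stage hW X n).Z

def e (hW : W.IsNormal) (X : POrd.{u}) (n : ℕ) : Zn hW X n → Zn hW X (n + 1) :=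
  up hW (stage hW X n)

theorem e_emb (hW : W.IsNormal) (X : POrd.{u}) (n : ℕ) : IsEmb (e hW X n) :=
  up_emb hW (stage hW X n)

def inX (hW : W.IsNormal) (X : POrd.{u}) (n : ℕ) (x : X) : Zn hW X (n + 1) :=
  (Sum.inl x : X ⊕ W.obj (stage hW X n).Z)

def inW (hW : W.IsNormal) (X : POrd.{u}) (n : ℕ) (σ : W.obj (Zn hW X n)) : Zn hW X (n + 1) :=
  (Sum.inr σ : X ⊕ W.obj (stage hW X n).Z)

theorem cases_succ (hW : W.IsNormal) (X : POrd.{u}) (n : ℕ) (z : Zn hW X (n + 1)) :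
    (∃ x, z = inX hW X n x) ∨ ∃ σ, z = inW hW X n σ := by
  rcases (z : X ⊕ W.obj (stage hW X n).Z) with x | σ
  · exact .inl ⟨x, rfl⟩
  · exact .inr ⟨σ, rfl⟩

theorem e_inX (hW : W.IsNormal) (X : POrd.{u}) (n : ℕ) (x : X) :
    e hW X (n + 1) (inX hW X n x) = inX hW X (n + 1) x := rfl

theorem e_inW (hW : W.IsNormal) (X : POrd.{u}) (n : ℕ) (σ : W.obj (Zn hW X n)) :
    e hW X (n + 1) (inW hW X n σ) =
      inW hW X (n + 1) (W.map (e hW X n) (isEmb_quasi (e_emb hW X n)) σ) := rfl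

theorem N_iff (hW : W.IsNormal) (X : POrd.{u}) (n : ℕ) (s t : Zn hW X (n + 1)) :
    s ≤ t ↔ (B W X (Zn hW X n) s t ∨ ∃ v ∈ S W X (Zn hW X n) t, s ≤ e hW X n v) := by
  refine (next_le hW (stage hW X n) s t).trans (or_congr Iff.rfl ?_)
  refine exists_congr fun v => and_congr Iff.rfl ?_
  exact R_iff _ _ _

theorem inX_inX (hW : W.IsNormal) (X : POrd.{u}) (n : ℕ) (x y : X) :
    inX hW X n x ≤ inX hW X n y ↔ x ≤ y := by
  rw [N_iff]; simp [inX, B, S]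

theorem inX_inW (hW : W.IsNormal) (X : POrd.{u}) (n : ℕ) (x : X) (τ : W.obj (Zn hW X n)) :
    inX hW X n x ≤ inW hW X n τ ↔ ∃ v ∈ W.supp τ, inX hW X n x ≤ e hW X n v := by
  rw [N_iff]; simp [inX, inW, B, S]

theorem inW_inX (hW : W.IsNormal) (X : POrd.{u}) (n : ℕ) (x : X) (τ : W.obj (Zn hW X n)) :
    ¬ inW hW X n τ ≤ inX hW X n x := by
  rw [N_iff]; simp [inX, inW, B, S]

theorem inW_inW (hW : W.IsNormal) (X : POrd.{u}) (n : ℕ) (σ τ : W.obj (Zn hW X n)) :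
    inW hW X n σ ≤ inW hW X n τ ↔
      (σ ≤ τ ∨ ∃ v ∈ W.supp τ, inW hW X n σ ≤ e hW X n v) := by
  rw [N_iff]; simp [inW, B, S]

/-! Iterated transition maps. -/

def E (hW : W.IsNormal) (X : POrd.{u}) {n m : ℕ} (h : n ≤ m) : Zn hW X n → Zn hW X m :=
  Nat.leRecOn (C := fun k => Zn hW X k) h (fun {k} => e hW X k)

theorem E_self (hW : W.IsNormal) (X : POrd.{u}) {n : ℕ} (h : n ≤ n) (z : Zn hW X n) :
    E hW X h z = z := Nat.leRecOn_self (C := fun k => Zn hW X k) z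

theorem E_succ (hW : W.IsNormal) (X : POrd.{u}) {n m : ℕ} (h : n ≤ m) (h' : n ≤ m + 1)
    (z : Zn hW X n) : E hW X h' z = e hW X m (E hW X h z) := Nat.leRecOn_succ (C := fun k => Zn hW X k) h z

theorem E_trans (hW : W.IsNormal) (X : POrd.{u}) {n m k : ℕ} (h : n ≤ m) (h' : m ≤ k)
    (z : Zn hW X n) : E hW X h' (E hW X h z) = E hW X (h.trans h') z :=
  (Nat.leRecOn_trans (C := fun k => Zn hW X k) h h' z).symm

theorem E_emb (hW : W.IsNormal) (X : POrd.{u}) {n m : ℕ} (h : n ≤ m) : IsEmb (E hW X h) := by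
  induction m, h using Nat.le_induction with
  | base => intro x y; simp only [E_self]
  | succ m h ih =>
    intro x y
    rw [E_succ hW X h, E_succ hW X h, ← e_emb hW X m, ← ih]

theorem E_inX (hW : W.IsNormal) (X : POrd.{u}) {n m : ℕ} (h : n ≤ m) (h' : n + 1 ≤ m + 1)
    (x : X) : E hW X h' (inX hW X n x) = inX hW X m x := by
  induction m, h using Nat.le_induction with
  | base => rw [E_self]
  | succ m h ih => rw [E_succ hW X (Nat.succ_le_succ h), ih, e_inX]

theorem E_inW (hW : W.IsNormal) (X : POrd.{u}) {n m : ℕ} (h : n ≤ m) (h' : n + 1 ≤ m + 1)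
    (σ : W.obj (Zn hW X n)) : E hW X h' (inW hW X n σ) =
      inW hW X m (W.map (E hW X h) (isEmb_quasi (E_emb hW X h)) σ) := by
  induction m, h using Nat.le_induction with
  | base =>
    rw [E_self]
    congr 1
    have : E hW X (le_refl n) = id := funext fun z => E_self hW X _ z
    rw [map_congr W this _ quasiEmb_id, W.map_id]; rfl
  | succ m h ih =>
    rw [E_succ hW X (Nat.succ_le_succ h), ih, e_inW]
    congr 1
    exact map_map W _ _ _ _ _ _ (fun a => (E_succ hW X h _ a).symm) σ

/-! The limit. -/

def Pre (hW : W.IsNormal) (X : POrd.{u}) : Type u := Σ n : ℕ, Zn hW X n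

theorem lim_indep (hW : W.IsNormal) (X : POrd.{u}) {n m k l : ℕ} (a : Zn hW X n) (b : Zn hW X m)
    (h1 : n ≤ k) (h2 : m ≤ k) (h1' : n ≤ l) (h2' : m ≤ l) (h : E hW X h1 a ≤ E hW X h2 b) :
    E hW X h1' a ≤ E hW X h2' b := by
  rw [E_emb hW X (le_max_right k l), E_trans, E_trans]
  rw [E_emb hW X (le_max_left k l), E_trans, E_trans] at h
  exact h

instance preOrd (hW : W.IsNormal) (X : POrd.{u}) : Preorder (Pre hW X) where
  le a b := ∃ (k : ℕ) (h1 : a.1 ≤ k) (h2 : b.1 ≤ k), E hW X h1 a.2 ≤ E hW X h2 b.2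
  le_refl a := ⟨a.1, le_rfl, le_rfl, le_rfl⟩
  le_trans := by
    rintro a b c ⟨k, h1, h2, h⟩ ⟨l, h3, h4, h'⟩
    have A : a.1 ≤ max k l := h1.trans (le_max_left _ _)
    have B' : b.1 ≤ max k l := h2.trans (le_max_left _ _)
    have C : c.1 ≤ max k l := h4.trans (le_max_right _ _)
    exact ⟨max k l, A, C, (lim_indep hW X _ _ h1 h2 A B' h).trans
      (lim_indep hW X _ _ h3 h4 B' C h')⟩

def Lim (hW : W.IsNormal) (X : POrd.{u}) : POrd.{u} :=
  ⟨Antisymmetrization (Pre hW X) (· ≤ ·)⟩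

def j (hW : W.IsNormal) (X : POrd.{u}) (n : ℕ) (z : Zn hW X n) : Lim hW X :=
  toAntisymmetrization (α := Pre hW X) (· ≤ ·) ⟨n, z⟩

theorem j_le (hW : W.IsNormal) (X : POrd.{u}) {n m k : ℕ} (a : Zn hW X n) (b : Zn hW X m)
    (h1 : n ≤ k) (h2 : m ≤ k) :
    j hW X n a ≤ j hW X m b ↔ E hW X h1 a ≤ E hW X h2 b := by
  constructor
  · rintro ⟨l, h3, h4, h⟩
    exact lim_indep hW X _ _ h3 h4 h1 h2 h
  · intro h
    exact ⟨k, h1, h2, h⟩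

theorem j_emb (hW : W.IsNormal) (X : POrd.{u}) (n : ℕ) : IsEmb (j hW X n) := by
  intro a b
  rw [j_le hW X a b le_rfl le_rfl, E_self, E_self]

theorem j_q (hW : W.IsNormal) (X : POrd.{u}) (n : ℕ) : QuasiEmb (j hW X n) :=
  isEmb_quasi (j_emb hW X n)

theorem E_q (hW : W.IsNormal) (X : POrd.{u}) {n m : ℕ} (h : n ≤ m) : QuasiEmb (E hW X h) :=
  isEmb_quasi (E_emb hW X h)

theorem j_E (hW : W.IsNormal) (X : POrd.{u}) {n m : ℕ} (h : n ≤ m) (a : Zn hW X n) :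
    j hW X m (E hW X h a) = j hW X n a := by
  apply le_antisymm
  · rw [j_le hW X _ _ le_rfl h, E_self]
  · rw [j_le hW X _ _ h le_rfl, E_self]

theorem j_e (hW : W.IsNormal) (X : POrd.{u}) (n : ℕ) (a : Zn hW X n) :
    j hW X (n + 1) (e hW X n a) = j hW X n a := by
  rw [← j_E hW X (Nat.le_succ n) a, E_succ hW X le_rfl, E_self]

theorem j_surj (hW : W.IsNormal) (X : POrd.{u}) (z : Lim hW X) : ∃ n a, z = j hW X n a := by
  induction z using Quotient.inductionOn with
  | _ p => exact ⟨p.1, p.2, rfl⟩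

theorem j_finite (hW : W.IsNormal) (X : POrd.{u}) (s : Set (Lim hW X)) (hs : s.Finite) :
    ∃ n, s ⊆ Set.range (j hW X n) := by
  induction s, hs using Set.Finite.induction_on with
  | empty => exact ⟨0, Set.empty_subset _⟩
  | @insert a s _ _ ih =>
    obtain ⟨n, hn⟩ := ih
    obtain ⟨m, b, rfl⟩ := j_surj hW X a
    refine ⟨max n m, Set.insert_subset ⟨_, j_E hW X (le_max_right n m) b⟩ ?_⟩
    intro z hz
    obtain ⟨c, rfl⟩ := hn hz
    exact ⟨_, j_E hW X (le_max_left n m) c⟩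

theorem rep (hW : W.IsNormal) (X : POrd.{u}) (σ : W.obj (Lim hW X)) :
    ∃ n, ∃ σ' : W.obj (Zn hW X n), W.map (j hW X n) (j_q hW X n) σ' = σ := by
  obtain ⟨n, hn⟩ := j_finite hW X _ (W.supp_finite σ)
  exact ⟨n, W.supp_cond _ (j_q hW X n) (j_emb hW X n) σ hn⟩

theorem rep_up (hW : W.IsNormal) (X : POrd.{u}) {n m : ℕ} (h : n ≤ m)
    (σ : W.obj (Zn hW X n)) :
    W.map (j hW X m) (j_q hW X m) (W.map (E hW X h) (E_q hW X h) σ) =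
      W.map (j hW X n) (j_q hW X n) σ :=
  map_map W _ _ _ _ _ _ (j_E hW X h) σ

theorem rep2 (hW : W.IsNormal) (X : POrd.{u}) (σ τ : W.obj (Lim hW X)) :
    ∃ n, ∃ σ' τ' : W.obj (Zn hW X n), W.map (j hW X n) (j_q hW X n) σ' = σ ∧
      W.map (j hW X n) (j_q hW X n) τ' = τ := by
  obtain ⟨n, σ', rfl⟩ := rep hW X σ
  obtain ⟨m, τ', rfl⟩ := rep hW X τ
  exact ⟨max n m, _, _, rep_up hW X (le_max_left n m) σ', rep_up hW X (le_max_right n m) τ'⟩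

def iota (hW : W.IsNormal) (X : POrd.{u}) (x : X) : Lim hW X := j hW X 1 (inX hW X 0 x)

theorem iota_eq (hW : W.IsNormal) (X : POrd.{u}) (n : ℕ) (x : X) :
    iota hW X x = j hW X (n + 1) (inX hW X n x) := by
  rw [← E_inX hW X (Nat.zero_le n) (Nat.succ_le_succ (Nat.zero_le n)), j_E]; rfl

noncomputable def kappa (hW : W.IsNormal) (X : POrd.{u}) (σ : W.obj (Lim hW X)) : Lim hW X :=
  j hW X ((rep hW X σ).choose + 1) (inW hW X _ (rep hW X σ).choose_spec.choose)

theorem kappa_eq (hW : W.IsNormal) (X : POrd.{u}) (n : ℕ) (σ : W.obj (Zn hW X n)) :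
    kappa hW X (W.map (j hW X n) (j_q hW X n) σ) = j hW X (n + 1) (inW hW X n σ) := by
  have key : ∀ (m k : ℕ) (σ' : W.obj (Zn hW X m)) (σ : W.obj (Zn hW X k)),
      W.map (j hW X m) (j_q hW X m) σ' = W.map (j hW X k) (j_q hW X k) σ →
      j hW X (m + 1) (inW hW X m σ') = j hW X (k + 1) (inW hW X k σ) := by
    intro m k σ' σ h
    rw [← rep_up hW X (le_max_left m k), ← rep_up hW X (le_max_right m k)] at h
    have h2 := quasi_inj (W.map_quasiEmb _ _) h
    rw [← j_E hW X (Nat.succ_le_succ (le_max_left m k)) (inW hW X m σ'),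
      ← j_E hW X (Nat.succ_le_succ (le_max_right m k)) (inW hW X k σ),
      E_inW hW X (le_max_left m k), E_inW hW X (le_max_right m k), h2]
  exact key _ _ _ _ (rep hW X _).choose_spec.choose_spec

theorem lim_fp (hW : W.IsNormal) (X : POrd.{u}) :
    IsKruskalFP W X (Lim hW X) (iota hW X) (kappa hW X) := by
  have hki : ∀ (σ : W.obj (Lim hW X)) (y : X), ¬ kappa hW X σ ≤ iota hW X y := by
    intro σ y
    obtain ⟨n, σ, rfl⟩ := rep hW X σ
    rw [kappa_eq, iota_eq hW X n, ← j_emb]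
    exact inW_inX hW X n y σ
  refine ⟨?_, ?_, ?_, hki, ?_⟩
  · ext z
    simp only [Set.mem_inter_iff, Set.mem_range, Set.mem_empty_iff_false, iff_false]
    rintro ⟨⟨x, rfl⟩, σ, h⟩
    exact hki σ x h.le
  · intro x y h
    rw [iota, iota, ← j_emb, inX_inX] at h
    exact h
  · intro x τ
    obtain ⟨n, τ, rfl⟩ := rep hW X τ
    rw [kappa_eq, iota_eq hW X n, ← j_emb, inX_inW, W.supp_natural]
    simp only [Set.exists_mem_image]
    refine exists_congr fun v => and_congr Iff.rfl ?_
    rw [← j_e hW X n v, ← j_emb]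
  · intro σ τ
    obtain ⟨n, σ, τ, rfl, rfl⟩ := rep2 hW X σ τ
    rw [kappa_eq, kappa_eq, ← j_emb, inW_inW, W.supp_natural,
      ← W.map_emb _ _ (j_emb hW X n)]
    simp only [Set.exists_mem_image]
    refine or_congr Iff.rfl (exists_congr fun v => and_congr Iff.rfl ?_)
    rw [← j_e hW X n v, ← j_emb]

/-! The map into another fixed point. -/

variable {Z' : POrd.{u}} {ι' : X → Z'} {κ' : W.obj Z' → Z'}

structure Mor (T : Stage W X) (ι' : X → Z') (κ' : W.obj Z' → Z') where
  f : T.Z → Z'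
  q : QuasiEmb f
  inl : ∀ z x, T.d z = .inl x → f z = ι' x
  inr : ∀ z σ, T.d z = .inr σ → f z = κ' (W.map f q σ)

def nextF (hW : W.IsNormal) (T : Stage W X) (M : Mor T ι' κ') : nextOrd hW T → Z'
  | .inl x => ι' x
  | .inr σ => κ' (W.map M.f M.q σ)

theorem nextF_up (hW : W.IsNormal) (T : Stage W X) (M : Mor T ι' κ') (z : T.Z) :
    nextF hW T M (up hW T z) = M.f z := by
  unfold up
  rcases h : T.d z with x | σ
  · exact (M.inl z x h).symm
  · exact (M.inr z σ h).symm

theorem nextF_cases (hW : W.IsNormal) (H : IsKruskalFP W X Z' ι' κ') (T : Stage W X)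
    (M : Mor T ι' κ') (s t : nextOrd hW T) (h : nextF hW T M s ≤ nextF hW T M t) :
    B W X T.Z s t ∨ ∃ v ∈ S W X T.Z t, nextF hW T M s ≤ M.f v := by
  rcases s with s | s <;> rcases t with t | t <;> simp only [nextF, B, S] at *
  · exact .inl (H.iota_le _ _ h)
  · rw [H.iota_kappa, W.supp_natural] at h
    simp only [Set.exists_mem_image] at h
    exact .inr h
  · exact (H.kappa_iota _ _ h).elim
  · rw [H.kappa_kappa, W.supp_natural] at h
    simp only [Set.exists_mem_image] at h
    exact h.imp_left (W.map_quasiEmb _ _ _ _)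

theorem nextF_R (hW : W.IsNormal) (H : IsKruskalFP W X Z' ι' κ') (T : Stage W X)
    (M : Mor T ι' κ') (s : nextOrd hW T) (w : T.Z) (h : nextF hW T M s ≤ M.f w) :
    R T.d s w := by
  induction T.acc w with
  | intro w _ ih =>
    rw [← nextF_up hW T M] at h
    rcases nextF_cases hW H T M _ _ h with h | ⟨v, hv, h⟩
    · exact .base h
    · exact .step hv (ih v hv h)

theorem nextF_q (hW : W.IsNormal) (H : IsKruskalFP W X Z' ι' κ') (T : Stage W X)
    (M : Mor T ι' κ') : QuasiEmb (nextF hW T M) := by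
  intro s t h
  rw [next_le]
  exact (nextF_cases hW H T M s t h).imp_right fun ⟨v, hv, h⟩ => ⟨v, hv, nextF_R hW H T M s v h⟩

def nextM (hW : W.IsNormal) (H : IsKruskalFP W X Z' ι' κ') (T : Stage W X)
    (M : Mor T ι' κ') : Mor (next hW T) ι' κ' where
  f := nextF hW T M
  q := nextF_q hW H T M
  inl := by
    rintro (z | z) x h
    · cases h; rfl
    · cases h
  inr := by
    rintro (z | z) σ h
    · cases h
    · cases h
      exact congrArg κ' (map_map W _ _ _ _ _ _ (nextF_up hW T M) z).symm

def zeroM (ι' : X → Z') (κ' : W.obj Z' → Z') : Mor (zero W X) ι' κ' where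
  f := fun a => PEmpty.elim a
  q := fun a => PEmpty.elim a
  inl := fun a => PEmpty.elim a
  inr := fun a => PEmpty.elim a

def stageM (hW : W.IsNormal) (H : IsKruskalFP W X Z' ι' κ') :
    (n : ℕ) → Mor (stage hW X n) ι' κ'
  | 0 => zeroM ι' κ'
  | n + 1 => nextM hW H _ (stageM hW H n)

def fn (hW : W.IsNormal) (H : IsKruskalFP W X Z' ι' κ') (n : ℕ) : Zn hW X n → Z' :=
  (stageM hW H n).f

theorem fn_q (hW : W.IsNormal) (H : IsKruskalFP W X Z' ι' κ') (n : ℕ) : QuasiEmb (fn hW H n) :=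
  (stageM hW H n).q

theorem fn_inX (hW : W.IsNormal) (H : IsKruskalFP W X Z' ι' κ') (n : ℕ) (x : X) :
    fn hW H (n + 1) (inX hW X n x) = ι' x := rfl

theorem fn_inW (hW : W.IsNormal) (H : IsKruskalFP W X Z' ι' κ') (n : ℕ)
    (σ : W.obj (Zn hW X n)) :
    fn hW H (n + 1) (inW hW X n σ) = κ' (W.map (fn hW H n) (fn_q hW H n) σ) := rfl

theorem fn_E (hW : W.IsNormal) (H : IsKruskalFP W X Z' ι' κ') {n m : ℕ} (h : n ≤ m)
    (z : Zn hW X n) : fn hW H m (E hW X h z) = fn hW H n z := by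
  induction m, h using Nat.le_induction with
  | base => rw [E_self]
  | succ m h ih =>
    rw [E_succ hW X h, ← ih]
    exact nextF_up hW _ (stageM hW H m) _

noncomputable def limF (hW : W.IsNormal) (H : IsKruskalFP W X Z' ι' κ') (z : Lim hW X) : Z' :=
  fn hW H (j_surj hW X z).choose (j_surj hW X z).choose_spec.choose

theorem limF_j (hW : W.IsNormal) (H : IsKruskalFP W X Z' ι' κ') (n : ℕ) (z : Zn hW X n) :
    limF hW H (j hW X n z) = fn hW H n z := by
  have key : ∀ (m k : ℕ) (a : Zn hW X m) (b : Zn hW X k), j hW X m a = j hW X k b →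
      fn hW H k b = fn hW H m a := by
    intro m k a b h
    rw [← j_E hW X (le_max_left m k), ← j_E hW X (le_max_right m k)] at h
    rw [← fn_E hW H (le_max_left m k), ← fn_E hW H (le_max_right m k),
      quasi_inj (j_q hW X _) h]
  exact key _ _ _ _ (j_surj hW X _).choose_spec.choose_spec

theorem limF_q (hW : W.IsNormal) (H : IsKruskalFP W X Z' ι' κ') : QuasiEmb (limF hW H) := by
  intro z w h
  obtain ⟨n, a, rfl⟩ := j_surj hW X z
  obtain ⟨m, b, rfl⟩ := j_surj hW X w
  rw [limF_j, limF_j, ← fn_E hW H (le_max_left n m), ← fn_E hW H (le_max_right n m)] at h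
  rw [j_le hW X a b (le_max_left n m) (le_max_right n m)]
  exact fn_q hW H _ _ _ h

theorem lim_initial (hW : W.IsNormal) (X : POrd.{u}) :
    IsInitialKFP W X (Lim hW X) (iota hW X) (kappa hW X) := by
  refine ⟨lim_fp hW X, fun Z' ι' κ' H => ⟨limF hW H, ⟨limF_q hW H, ?_, ?_⟩, ?_⟩⟩
  · funext x
    simp only [Function.comp_apply]
    rw [iota_eq hW X 0, limF_j, fn_inX]
  · funext σ
    simp only [Function.comp_apply]
    obtain ⟨n, σ, rfl⟩ := rep hW X σ
    rw [kappa_eq, limF_j, fn_inW]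
    exact congrArg κ' (map_map W _ _ _ _ _ _ (limF_j hW H n) σ).symm
  · rintro g ⟨hg, h1, h2⟩
    have key : ∀ n (a : Zn hW X n), g (j hW X n a) = fn hW H n a := by
      intro n
      induction n with
      | zero => intro a; exact PEmpty.elim a
      | succ n ih =>
        intro a
        rcases cases_succ hW X n a with ⟨x, rfl⟩ | ⟨σ, rfl⟩
        · rw [← iota_eq, fn_inX]
          exact congrFun h1 x
        · rw [← kappa_eq, fn_inW]
          refine (congrFun h2 _).trans ?_
          exact congrArg κ' (map_map W _ _ _ _ _ _ ih σ)
    funext z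
    obtain ⟨n, a, rfl⟩ := j_surj hW X z
    rw [key, limF_j]

end stages

end KFP

/-- Initial Kruskal fixed points exist. -/
theorem exists_initial_kruskalFP (W : PODilator.{u}) (hW : W.IsNormal) (X : POrd.{u}) :
    ∃ (Z : POrd.{u}) (ι : X → Z) (κ : W.obj Z → Z), IsInitialKFP W X Z ι κ := by
  exact ⟨_, _, _, KFP.lim_initial hW X⟩
end
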